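/- arXiv:2007.07088 — 7 statements merged into one kernel-verified Lean document; each statement's English description precedes it below -/
import Mathlib

section
/- Given a setting (N,M,q) and a bound r ∈ [0,1], if a mechanism φ is r-locally partially strategyproof, then φ is r²-partially strategyproof. -/
open Finset

/-- A preference order on `M` is a strict total order, represented as a ranking
bijection to `Fin m` (rank `0` is the most preferred object).
`P a < P b` means that `P` ranks `a` above `b`. -/
def Consistent {M : Type*} {m : ℕ} (u : M → ℝ) (P : M ≃ Fin m) : Prop :=
  ∀ a b : M, P a < P b → u b < u a

/-- The minimal utility value `min_{j ∈ M} u(j)`. -/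
noncomputable def minU {M : Type*} [Fintype M] [Nonempty M] (u : M → ℝ) : ℝ :=
  Finset.univ.inf' Finset.univ_nonempty u

/-- `u` satisfies uniformly relatively bounded indifference with respect to `r`. -/
def URBI {M : Type*} [Fintype M] [Nonempty M] (u : M → ℝ) (r : ℝ) : Prop :=
  ∀ a b : M, u b < u a → u b - minU u ≤ r * (u a - minU u)

/-- `P'` is in the neighborhood of `P`: it is obtained from `P` by swapping two
consecutively ranked objects. -/
def Nbhd {M : Type*} {m : ℕ} (P P' : M ≃ Fin m) : Prop :=
  ∃ (k : ℕ) (h : k + 1 < m),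
    P' = P.trans (Equiv.swap ⟨k, Nat.lt_of_succ_lt h⟩ ⟨k + 1, h⟩)

/-- A feasible random assignment mechanism for the setting `(N, M, q)`:
entries are nonnegative, each agent's row sums to one, and no object is
assigned beyond its capacity. -/
def Feasible {N M : Type*} [Fintype N] [Fintype M] {m : ℕ} (q : M → ℕ)
    (φ : (N → M ≃ Fin m) → N → M → ℝ) : Prop :=
  ∀ P : N → M ≃ Fin m,
    (∀ i j, 0 ≤ φ P i j) ∧ (∀ i, ∑ j, φ P i j = 1) ∧ (∀ j, ∑ i, φ P i j ≤ (q j : ℝ))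

/-- `φ` is `r`-partially strategyproof. -/
def PSP {N M : Type*} [DecidableEq N] [Fintype M] [Nonempty M] {m : ℕ}
    (φ : (N → M ≃ Fin m) → N → M → ℝ) (r : ℝ) : Prop :=
  ∀ (P : N → M ≃ Fin m) (i : N) (P' : M ≃ Fin m) (u : M → ℝ),
    (∀ j, 0 ≤ u j) → Consistent u (P i) → URBI u r →
    ∑ j, u j * φ (Function.update P i P') i j ≤ ∑ j, u j * φ P i j

/-- `φ` is `r`-locally partially strategyproof: the incentive constraint is only
required for misreports in the neighborhood of the truthful report. -/
def LocalPSP {N M : Type*} [DecidableEq N] [Fintype M] [Nonempty M] {m : ℕ}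
    (φ : (N → M ≃ Fin m) → N → M → ℝ) (r : ℝ) : Prop :=
  ∀ (P : N → M ≃ Fin m) (i : N) (P' : M ≃ Fin m), Nbhd (P i) P' →
    ∀ u : M → ℝ, (∀ j, 0 ≤ u j) → Consistent u (P i) → URBI u r →
    ∑ j, u j * φ (Function.update P i P') i j ≤ ∑ j, u j * φ P i j

/-!
Write `d` for the change of an agent's row when she swaps two adjacent objects `a`, `b` of a
report `Q`. The two local incentive constraints at `Q` and at the swapped report extend, by a
limiting argument, to all utilities that decay by a factor `r` per rank. Testing them from the top
rank downwards shows that `d` vanishes at every object ranked above `a` and `b`, and that `d b ≥ 0`.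

Any misreport can be reached from the true order `P` by insertion sort run backwards. Each of its
swaps moves an object `b` past its `P`-better predecessor `a`, while the objects other than `b`
from rank `Q a` on are still in `P`-order. A utility `u` decaying by `r ^ 2` along `P` leaves room
to raise the value of `b` to `r` times that of `a`, which makes it decay by `r` along this part of
`Q`; hence the raised utility does not gain from `d`, and since `d b ≥ 0`, neither does `u`.

For `r = 0` the limit is not available, but a utility satisfying URBI(0) exists only for at most two
objects, and then every consistent utility satisfies URBI(0), so `r` may be replaced by `1`.
-/

open Matrix Topology

lemma trans_swap_trans_swap {M α : Type*} [DecidableEq α] (Q : M ≃ α) (x y : α) :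
    (Q.trans (Equiv.swap x y)).trans (Equiv.swap x y) = Q := by
  ext j
  simp

section InsertionSort

variable {M α : Type*} [LinearOrder α]

/-- One swap of insertion sort run backwards, from the ranking `P` towards another ranking:
`a` and `b` are adjacent in `Q` and still ordered as in `P`, and so are all objects other than `b`
from the rank of `a` on. The swap turns `Q` into `Q.trans (Equiv.swap (Q a) (Q b))`. -/
structure InsertionStep (P Q : M ≃ α) (a b : M) : Prop where
  covBy : Q a ⋖ Q b
  lt : P a < P b
  lt_of_lt : ∀ i j, i ≠ b → j ≠ b → Q a ≤ Q i → Q i < Q j → P i < P j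

lemma eq_of_forall_lt_imp_lt [WellFoundedLT α] {P R : M ≃ α} (h : ∀ i j, R i < R j → P i < P j) :
    R = P := by
  have hmono : StrictMono (R.symm.trans P) := fun x y hxy => h _ _ (by simpa using hxy)
  have hrefl : hmono.orderIsoOfSurjective _ (R.symm.trans P).surjective = OrderIso.refl α :=
    Subsingleton.elim _ _
  ext j
  simpa using (DFunLike.congr_fun hrefl (R j)).symm

lemma exists_last_inversion [Finite α] {P R : M ≃ α} (hne : R ≠ P) :
    ∃ a b, R b ⋖ R a ∧ P a < P b ∧ ∀ i j, R b < R i → R i < R j → P i < P j := by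
  let inverted : Set M := {b | ∃ a, R b < R a ∧ P a < P b}
  have : Finite M := .of_equiv α R.symm
  have hsorted : ∀ i ∉ inverted, ∀ j, R i < R j → P i < P j := fun i hi j hij =>
    (not_lt.1 fun hji => hi ⟨j, hij, hji⟩).lt_of_ne
      (P.injective.ne (ne_of_apply_ne R hij.ne))
  have hinv : inverted.Nonempty := by
    by_contra hempty
    rw [Set.not_nonempty_iff_eq_empty] at hempty
    exact hne (eq_of_forall_lt_imp_lt fun i => hsorted i (by simp [hempty]))
  obtain ⟨b, ⟨c, hbc, hcb⟩, hmax⟩ := inverted.toFinite.exists_maximalFor R _ hinv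
  have hafter : ∀ i j, R b < R i → R i < R j → P i < P j := fun i j hbi =>
    hsorted i (fun hi => (hmax hi hbi.le).not_gt hbi) j
  obtain ⟨x, hbx⟩ := exists_covBy_of_wellFoundedLT (not_isMax_of_lt hbc)
  obtain ⟨a, rfl⟩ := R.surjective x
  refine ⟨a, b, hbx, ?_, hafter⟩
  rcases (hbx.ge_of_gt hbc).eq_or_lt with hac | hac
  · rwa [R.injective hac]
  · exact (hafter a c hbx.lt hac).trans hcb

lemma exists_insertionStep [Finite α] {P R : M ≃ α} (hne : R ≠ P) :
    ∃ Q a b, InsertionStep P Q a b ∧ Q.trans (Equiv.swap (Q a) (Q b)) = R := by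
  obtain ⟨a, b, hcov, hlt, hafter⟩ := exists_last_inversion hne
  set Q := R.trans (Equiv.swap (R b) (R a))
  have hQa : Q a = R b := Equiv.swap_apply_right _ _
  have hQb : Q b = R a := Equiv.swap_apply_left _ _
  have hQ : ∀ j, j ≠ a → j ≠ b → Q j = R j := fun j hja hjb =>
    Equiv.swap_apply_of_ne_of_ne (R.injective.ne hjb) (R.injective.ne hja)
  refine ⟨Q, a, b, ⟨by rwa [hQa, hQb], hlt, fun i j hib hjb hai hij => ?_⟩, ?_⟩
  · have hja : j ≠ a := by
      rintro rfl
      exact hai.not_gt hij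
    rw [hQ j hja hjb] at hij
    rw [hQa] at hai
    by_cases hia : i = a
    · rw [hia, hQa] at hij
      rw [hia]
      exact hafter a j hcov.lt ((hcov.ge_of_gt hij).lt_of_ne (R.injective.ne hja.symm))
    · rw [hQ i hia hib] at hai hij
      exact hafter i j (hai.lt_of_ne (R.injective.ne hib.symm)) hij
  · rw [hQa, hQb]
    exact trans_swap_trans_swap R _ _

lemma InsertionStep.toLex_lt {P Q : M ≃ α} {a b : M} (hstep : InsertionStep P Q a b) :
    toLex (P ∘ Q.symm) < toLex (P ∘ (Q.trans (Equiv.swap (Q a) (Q b))).symm) := by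
  set Q' := Q.trans (Equiv.swap (Q a) (Q b))
  have hQ : (P ∘ Q'.symm) ∘ Equiv.swap (Q a) (Q b) = P ∘ Q.symm := by
    ext x
    simp [Q']
  rw [← hQ]
  exact Pi.lex_desc hstep.covBy.le (by simpa [Q'] using hstep.lt)

lemma insertionStep_induction [Finite α] {P : M ≃ α} {motive : (M ≃ α) → Prop} (refl : motive P)
    (step : ∀ Q a b, InsertionStep P Q a b → motive Q →
      motive (Q.trans (Equiv.swap (Q a) (Q b)))) (R : M ≃ α) : motive R := by
  have hwf := InvImage.wf (fun R : M ≃ α => toLex (P ∘ R.symm)) wellFounded_lt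
  induction R using hwf.induction with
  | _ R ih =>
    by_cases hne : R = P
    · rwa [hne]
    · obtain ⟨Q, a, b, hstep, rfl⟩ := exists_insertionStep hne
      exact step Q a b hstep (ih Q hstep.toLex_lt)

end InsertionSort

section Decay

variable {M : Type*} {m : ℕ} {r : ℝ} {Q : M ≃ Fin m} {v : M → ℝ}

/-- The values of `v` on `s` are nonnegative and, going down the ranking `Q`, each is at most `r`
times any earlier one. On all of `M` this is the weak form of "consistent with `Q` and URBI(`r`)",
with the minimum replaced by `0`. -/
structure DecaysOn (Q : M ≃ Fin m) (r : ℝ) (s : Set M) (v : M → ℝ) : Prop where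
  nonneg : ∀ i ∈ s, 0 ≤ v i
  le_mul : ∀ i ∈ s, ∀ j ∈ s, Q i < Q j → v j ≤ r * v i

lemma DecaysOn.add {s : Set M} {w : M → ℝ} (hv : DecaysOn Q r s v) (hw : DecaysOn Q r s w) :
    DecaysOn Q r s (v + w) where
  nonneg i hi := add_nonneg (hv.nonneg i hi) (hw.nonneg i hi)
  le_mul i hi j hj hij := by
    simpa only [Pi.add_apply, mul_add] using
      add_le_add (hv.le_mul i hi j hj hij) (hw.le_mul i hi j hj hij)

lemma DecaysOn.smul {s : Set M} {c : ℝ} (hc : 0 ≤ c) (hv : DecaysOn Q r s v) :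
    DecaysOn Q r s (c • v) where
  nonneg i hi := mul_nonneg hc (hv.nonneg i hi)
  le_mul i hi j hj hij := by
    simpa only [Pi.smul_apply, smul_eq_mul, mul_left_comm r] using
      mul_le_mul_of_nonneg_left (hv.le_mul i hi j hj hij) hc

lemma DecaysOn.le_of_lt (hr1 : r ≤ 1) (hv : DecaysOn Q r Set.univ v) {i j : M} (hij : Q i < Q j) :
    v j ≤ v i :=
  (hv.le_mul i trivial j trivial hij).trans (mul_le_of_le_one_left (hv.nonneg i trivial) hr1)

lemma Consistent.lt_iff_lt (hv : Consistent v Q) {i j : M} : v j < v i ↔ Q i < Q j := by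
  refine ⟨fun hji => ?_, hv i j⟩
  by_contra! hle
  rcases hle.eq_or_lt with heq | hlt
  · exact hji.ne (congrArg v (Q.injective heq))
  · exact hji.not_gt (hv j i hlt)

lemma decaysOn_pow (hr0 : 0 ≤ r) (hr1 : r ≤ 1) :
    DecaysOn Q r Set.univ fun j => r ^ (Q j : ℕ) where
  nonneg _ _ := pow_nonneg hr0 _
  le_mul i _ j _ hij := by
    rw [← pow_succ']
    exact pow_le_pow_of_le_one hr0 hr1 hij

lemma exists_decaysOn_consistent (Q : M ≃ Fin m) (hr0 : 0 < r) (hr1 : r ≤ 1) :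
    ∃ g : M → ℝ, DecaysOn Q r Set.univ g ∧ Consistent g Q := by
  have hpow := decaysOn_pow (Q := Q) hr0.le hr1
  have hpos : ∀ j, (0 : ℝ) < m - (Q j : ℕ) := fun j => sub_pos.2 (Nat.cast_lt.2 (Q j).isLt)
  have hrank : ∀ i j, Q i < Q j → (m - (Q j : ℕ) : ℝ) < m - (Q i : ℕ) := fun i j hij =>
    sub_lt_sub_left (Nat.cast_lt.2 hij) _
  -- The linear factor keeps the witness strictly decreasing when `r = 1`.
  refine ⟨fun j => (m - (Q j : ℕ)) * r ^ (Q j : ℕ),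
    ⟨fun i _ => (mul_pos (hpos i) (pow_pos hr0 _)).le, fun i _ j _ hij => ?_⟩, fun i j hij => ?_⟩
  · rw [mul_left_comm r]
    exact mul_le_mul (hrank i j hij).le (hpow.le_mul i trivial j trivial hij)
      (pow_nonneg hr0.le _) (hpos i).le
  · exact mul_lt_mul (hrank i j hij) (hpow.le_of_lt hr1 hij) (pow_pos hr0 _) (hpos i).le

lemma DecaysOn.extend (hr0 : 0 < r) (hr1 : r ≤ 1) {a : M}
    (hv : DecaysOn Q r {j | Q a ≤ Q j} v) :
    DecaysOn Q r Set.univ fun j =>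
      if Q j < Q a then v a / r ^ (Q a : ℕ) * r ^ (Q j : ℕ) else v j := by
  set K := v a / r ^ (Q a : ℕ)
  have hva : 0 ≤ v a := hv.nonneg a (le_refl (Q a))
  have htop : DecaysOn Q r Set.univ fun j => K * r ^ (Q j : ℕ) :=
    (decaysOn_pow hr0.le hr1).smul (div_nonneg hva (pow_nonneg hr0.le _))
  have hKa : K * r ^ (Q a : ℕ) = v a := div_mul_cancel₀ _ (pow_pos hr0 _).ne'
  have hle_va : ∀ j, Q a ≤ Q j → v j ≤ v a := fun j haj => by
    rcases haj.eq_or_lt with heq | hlt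
    · rw [Q.injective heq]
    · exact (hv.le_mul a (le_refl (Q a)) j haj hlt).trans (mul_le_of_le_one_left hva hr1)
  refine ⟨fun i _ => ?_, fun i _ j _ hij => ?_⟩
  · split_ifs with hia
    · exact htop.nonneg i trivial
    · exact hv.nonneg i (not_lt.1 hia)
  · rcases lt_or_ge (Q j) (Q a) with hja | haj
    · simp only [if_pos hja, if_pos (hij.trans hja)]
      exact htop.le_mul i trivial j trivial hij
    · rcases lt_or_ge (Q i) (Q a) with hia | hai
      · simp only [if_neg haj.not_gt, if_pos hia]
        exact (hle_va j haj).trans (hKa ▸ htop.le_mul i trivial a trivial hia)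
      · simp only [if_neg haj.not_gt, if_neg hai.not_gt]
        exact hv.le_mul i hai j haj hij

lemma InsertionStep.decaysOn_update [DecidableEq M] {P : M ≃ Fin m} {a b : M} (hr0 : 0 ≤ r)
    (hr1 : r ≤ 1) (hstep : InsertionStep P Q a b) (hv : DecaysOn P (r ^ 2) Set.univ v) :
    DecaysOn Q r {j | Q a ≤ Q j} (Function.update v b (r * v a)) := by
  have hva : 0 ≤ r * v a := mul_nonneg hr0 (hv.nonneg a trivial)
  have hsq : ∀ i j, P i < P j → v j ≤ r * (r * v i) := fun i j hij => by
    rw [← mul_assoc, ← sq]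
    exact hv.le_mul i trivial j trivial hij
  have hab : a ≠ b := ne_of_apply_ne Q hstep.covBy.lt.ne
  refine ⟨fun i _ => ?_, fun i hai j _ hij => ?_⟩
  · by_cases hib : i = b
    · rwa [hib, Function.update_self]
    · rw [Function.update_of_ne hib]
      exact hv.nonneg i trivial
  · by_cases hjb : j = b
    · subst hjb
      have hia : i = a := Q.injective ((hstep.covBy.le_of_lt hij).antisymm hai)
      rw [hia, Function.update_self, Function.update_of_ne hab]
    · rw [Function.update_of_ne hjb]
      by_cases hib : i = b
      · subst hib
        rw [Function.update_self]
        exact hsq a j (hstep.lt_of_lt a j hab hjb le_rfl (hstep.covBy.lt.trans hij))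
      · rw [Function.update_of_ne hib]
        exact (hsq i j (hstep.lt_of_lt i j hib hjb hai hij)).trans
          (mul_le_mul_of_nonneg_left (mul_le_of_le_one_left (hv.nonneg i trivial) hr1) hr0)

end Decay

section NoGain

variable {M : Type*} [Fintype M] [Nonempty M] {m : ℕ} {r : ℝ} {P Q : M ≃ Fin m} {u v d : M → ℝ}

/-- No agent with preference order `Q` and a utility satisfying URBI(`r`) gains from changing her
assignment by `d`. -/
def NoGain (r : ℝ) (Q : M ≃ Fin m) (d : M → ℝ) : Prop :=
  ∀ u : M → ℝ, (∀ j, 0 ≤ u j) → Consistent u Q → URBI u r → u ⬝ᵥ d ≤ 0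

lemma minU_le (u : M → ℝ) (j : M) : minU u ≤ u j :=
  Finset.inf'_le u (mem_univ j)

lemma DecaysOn.urbi (hr1 : r ≤ 1) (hv : DecaysOn Q r Set.univ v) (hc : Consistent v Q) :
    URBI v r := by
  intro i j hji
  have hmin : 0 ≤ minU v := Finset.le_inf' _ _ fun j _ => hv.nonneg j trivial
  have hle : v j ≤ r * v i := hv.le_mul i trivial j trivial (hc.lt_iff_lt.1 hji)
  linarith [mul_le_of_le_one_left hmin hr1]

lemma URBI.decaysOn_sub_minU (hu : URBI u r) (hc : Consistent u P) :
    DecaysOn P r Set.univ fun j => u j - minU u where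
  nonneg j _ := sub_nonneg.2 (minU_le u j)
  le_mul i _ j _ hij := hu i j (hc i j hij)

lemma NoGain.dotProduct_nonpos_of_decaysOn (hr0 : 0 < r) (hr1 : r ≤ 1) (hd : NoGain r Q d)
    (hv : DecaysOn Q r Set.univ v) : v ⬝ᵥ d ≤ 0 := by
  obtain ⟨g, hg, hgc⟩ := exists_decaysOn_consistent Q hr0 hr1
  have hperturbed : ∀ ε > 0, v ⬝ᵥ d + ε * (g ⬝ᵥ d) ≤ 0 := fun ε hε => by
    have hdecay := hv.add (hg.smul hε.le)
    have hcons : Consistent (v + ε • g) Q := fun i j hij =>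
      add_lt_add_of_le_of_lt (hv.le_of_lt hr1 hij) (mul_lt_mul_of_pos_left (hgc i j hij) hε)
    simpa [add_dotProduct, smul_dotProduct] using
      hd _ (fun j => hdecay.nonneg j trivial) hcons (hdecay.urbi hr1 hcons)
  have hlim : Filter.Tendsto (fun ε => v ⬝ᵥ d + ε * (g ⬝ᵥ d)) (𝓝[>] 0) (𝓝 (v ⬝ᵥ d)) :=
    tendsto_nhdsWithin_of_tendsto_nhds <|
      Continuous.tendsto' (by fun_prop) _ _ (by simp)
  exact le_of_tendsto hlim (Filter.eventually_of_mem self_mem_nhdsWithin hperturbed)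

lemma NoGain.dotProduct_nonpos_of_decaysOn_tail (hr0 : 0 < r) (hr1 : r ≤ 1) (hd : NoGain r Q d)
    {a : M} (hzero : ∀ j, Q j < Q a → d j = 0) (hv : DecaysOn Q r {j | Q a ≤ Q j} v) :
    v ⬝ᵥ d ≤ 0 := by
  refine le_of_eq_of_le (Finset.sum_congr rfl fun j _ => ?_)
    (hd.dotProduct_nonpos_of_decaysOn hr0 hr1 (hv.extend hr0 hr1))
  split_ifs with hj
  · rw [hzero j hj, mul_zero, mul_zero]
  · rfl

lemma NoGain.apply_nonpos (hr0 : 0 < r) (hr1 : r ≤ 1) (hd : NoGain r Q d) {a : M}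
    (hzero : ∀ j, Q j < Q a → d j = 0) : d a ≤ 0 := by
  classical
  have hnonneg : (0 : M → ℝ) ≤ Pi.single a 1 := Pi.single_nonneg.2 zero_le_one
  have hdecay : DecaysOn Q r {j | Q a ≤ Q j} (Pi.single a 1) := by
    refine ⟨fun i _ => hnonneg i, fun i hai j _ hij => ?_⟩
    rw [Pi.single_eq_of_ne (ne_of_apply_ne Q (lt_of_le_of_lt hai hij).ne')]
    exact mul_nonneg hr0.le (hnonneg i)
  simpa using hd.dotProduct_nonpos_of_decaysOn_tail hr0 hr1 hzero hdecay

lemma NoGain.apply_eq_zero_of_lt {k l : Fin m} (hr0 : 0 < r) (hr1 : r ≤ 1) (hkl : k < l)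
    (hd : NoGain r Q d) (hd' : NoGain r (Q.trans (Equiv.swap k l)) (-d)) (x : M) (hx : Q x < k) :
    d x = 0 := by
  induction x using (InvImage.wf Q wellFounded_lt).induction with
  | _ x ih =>
    have hzero : ∀ j, Q j < Q x → d j = 0 := fun j hj => ih j hj (hj.trans hx)
    have hswap : ∀ j, Equiv.swap k l (Q j) < Equiv.swap k l (Q x) → Q j < Q x := fun j hj => by
      rw [Equiv.swap_apply_of_ne_of_ne hx.ne (hx.trans hkl).ne, Equiv.swap_apply_def] at hj
      split_ifs at hj with hjk hjl
      · exact absurd hj (hx.trans hkl).not_gt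
      · exact absurd hj hx.not_gt
      · exact hj
    have hzero' : ∀ j, Q.trans (Equiv.swap k l) j < Q.trans (Equiv.swap k l) x → (-d) j = 0 :=
      fun j hj => neg_eq_zero.2 (hzero j (hswap j hj))
    exact (hd.apply_nonpos hr0 hr1 hzero).antisymm
      (neg_nonpos.1 (hd'.apply_nonpos hr0 hr1 hzero'))

lemma NoGain.apply_nonneg_of_swap {a b : M} (hr0 : 0 < r) (hr1 : r ≤ 1) (hab : Q a < Q b)
    (hd : NoGain r Q d) (hd' : NoGain r (Q.trans (Equiv.swap (Q a) (Q b))) (-d)) : 0 ≤ d b := by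
  refine neg_nonpos.1 (hd'.apply_nonpos hr0 hr1 fun j hj => ?_)
  rw [Equiv.trans_apply, Equiv.trans_apply, Equiv.swap_apply_right, Equiv.swap_apply_def] at hj
  split_ifs at hj with hja hjb
  · exact absurd hj hab.not_gt
  · exact absurd hj (lt_irrefl _)
  · exact neg_eq_zero.2 (hd.apply_eq_zero_of_lt hr0 hr1 hab hd' j hj)

lemma InsertionStep.dotProduct_nonpos {a b : M} (hr0 : 0 < r) (hr1 : r ≤ 1)
    (hstep : InsertionStep P Q a b) (hc : Consistent u P) (hu : URBI u (r ^ 2))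
    (hsum : ∑ j, d j = 0) (hd : NoGain r Q d)
    (hd' : NoGain r (Q.trans (Equiv.swap (Q a) (Q b))) (-d)) : u ⬝ᵥ d ≤ 0 := by
  classical
  have hab := hstep.covBy.lt
  set v : M → ℝ := fun j => u j - minU u
  have hv : DecaysOn P (r ^ 2) Set.univ v := hu.decaysOn_sub_minU hc
  have hraised : Function.update v b (r * v a) ⬝ᵥ d ≤ 0 :=
    hd.dotProduct_nonpos_of_decaysOn_tail hr0 hr1 (hd.apply_eq_zero_of_lt hr0 hr1 hab hd')
      (hstep.decaysOn_update hr0.le hr1 hv)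
  have hdb : 0 ≤ d b := hd.apply_nonneg_of_swap hr0 hr1 hab hd'
  have hvb : v b ≤ r * v a :=
    (hv.le_mul a trivial b trivial hstep.lt).trans <|
      mul_le_mul_of_nonneg_right (pow_le_of_le_one hr0.le hr1 two_ne_zero) (hv.nonneg a trivial)
  calc u ⬝ᵥ d = v ⬝ᵥ d + minU u * ∑ j, d j := by
        simp only [v, dotProduct, sub_mul, Finset.sum_sub_distrib, mul_sum, sub_add_cancel]
    _ = v ⬝ᵥ d := by rw [hsum, mul_zero, add_zero]
    _ ≤ Function.update v b (r * v a) ⬝ᵥ d := by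
        refine Finset.sum_le_sum fun j _ => ?_
        by_cases hjb : j = b
        · subst hjb
          rw [Function.update_self]
          exact mul_le_mul_of_nonneg_right hvb hdb
        · rw [Function.update_of_ne hjb]
    _ ≤ 0 := hraised

end NoGain

section Neighborhood

variable {M : Type*} {m : ℕ} {Q R : M ≃ Fin m}

lemma nbhd_trans_swap_of_covBy {k l : Fin m} (hkl : k ⋖ l) :
    Nbhd Q (Q.trans (Equiv.swap k l)) := by
  have hl : (l : ℕ) = k + 1 := (Nat.covBy_iff_add_one_eq.1 (Fin.covBy_iff.1 hkl)).symm
  exact ⟨k, hl ▸ l.isLt, by simp only [← hl, Fin.eta]⟩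

lemma Nbhd.symm (h : Nbhd Q R) : Nbhd R Q := by
  obtain ⟨k, hk, rfl⟩ := h
  exact ⟨k, hk, (trans_swap_trans_swap Q _ _).symm⟩

end Neighborhood

section Mechanism

variable {N M : Type*} [DecidableEq N] [Fintype M] [Nonempty M] {m : ℕ} {r : ℝ}
  {φ : (N → M ≃ Fin m) → N → M → ℝ}

lemma LocalPSP.noGain (hloc : LocalPSP φ r) (P : N → M ≃ Fin m) (i : N) {Q R : M ≃ Fin m}
    (hQR : Nbhd Q R) :
    NoGain r Q (φ (Function.update P i R) i - φ (Function.update P i Q) i) := by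
  intro u hu0 hc hu
  rw [dotProduct_sub, sub_nonpos]
  simpa [dotProduct] using hloc (Function.update P i Q) i R (by simpa using hQR) u hu0
    (by simpa using hc) hu

lemma LocalPSP.psp_sq_of_pos (hr0 : 0 < r) (hr1 : r ≤ 1) (hsum : ∀ P i, ∑ j, φ P i j = 1)
    (hloc : LocalPSP φ r) : PSP φ (r ^ 2) := by
  intro P i P' u _ hc hu
  suffices hall : ∀ R, u ⬝ᵥ φ (Function.update P i R) i ≤ u ⬝ᵥ φ P i from hall P'
  refine insertionStep_induction (P := P i) (by rw [Function.update_eq_self])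
    fun Q a b hstep ih => le_trans ?_ ih
  have hnbhd : Nbhd Q (Q.trans (Equiv.swap (Q a) (Q b))) := nbhd_trans_swap_of_covBy hstep.covBy
  rw [← sub_nonpos, ← dotProduct_sub]
  refine hstep.dotProduct_nonpos hr0 hr1 hc hu ?_ (hloc.noGain P i hnbhd) ?_
  · simp only [Pi.sub_apply, Finset.sum_sub_distrib, hsum, sub_self]
  · rw [neg_sub]
    exact hloc.noGain P i hnbhd.symm

lemma URBI.le_two_of_zero {P : M ≃ Fin m} {u : M → ℝ} (hu : URBI u 0) (hc : Consistent u P) :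
    m ≤ 2 := by
  by_contra! hm
  have hsecond := hu _ _ (hc (P.symm ⟨0, by omega⟩) (P.symm ⟨1, by omega⟩) (by simp))
  have hthird := hc (P.symm ⟨1, by omega⟩) (P.symm ⟨2, by omega⟩) (by simp)
  linarith [minU_le u (P.symm ⟨2, by omega⟩)]

lemma Consistent.urbi_zero_of_le_two {P : M ≃ Fin m} {u : M → ℝ} (hc : Consistent u P)
    (hm : m ≤ 2) : URBI u 0 := by
  intro i j hji
  have hij : P i < P j := hc.lt_iff_lt.1 hji
  have hlast : ∀ k, u j ≤ u k := fun k => by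
    by_contra! hkj
    have hjk : P j < P k := hc.lt_iff_lt.1 hkj
    omega
  rw [zero_mul, sub_nonpos]
  exact Finset.le_inf' _ _ fun k _ => hlast k

lemma LocalPSP.psp_zero (hsum : ∀ P i, ∑ j, φ P i j = 1) (hloc : LocalPSP φ 0) : PSP φ 0 := by
  intro P i P' u hu0 hc hu
  have hm : m ≤ 2 := hu.le_two_of_zero hc
  have hloc_one : LocalPSP φ 1 := fun P i P' hP' u hu0 hc _ =>
    hloc P i P' hP' u hu0 hc (hc.urbi_zero_of_le_two hm)
  have hu_one : URBI u (1 ^ 2) := fun a b hab => by linarith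
  exact hloc_one.psp_sq_of_pos one_pos le_rfl hsum P i P' u hu0 hc hu_one

theorem local_sufficiency_psp_general (hr : r ∈ Set.Icc (0 : ℝ) 1)
    (hsum : ∀ P i, ∑ j, φ P i j = 1) (hloc : LocalPSP φ r) : PSP φ (r ^ 2) := by
  rcases hr.1.eq_or_lt with rfl | hr0
  · simpa using hloc.psp_zero hsum
  · exact hloc.psp_sq_of_pos hr0 hr.2 hsum

end Mechanism

/-- **Theorem 1 (Local sufficiency for partial strategyproofness).**
Given a setting `(N, M, q)` and a bound `r ∈ [0,1]`, if a mechanism `φ` is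
`r`-locally partially strategyproof, then it is `r²`-partially strategyproof. -/
theorem local_sufficiency_psp
    {N M : Type*} [Fintype N] [DecidableEq N] [Fintype M] [DecidableEq M] [Nonempty M]
    {m : ℕ} (hm : Fintype.card M = m)
    (q : M → ℕ) (hq : ∀ j, 1 ≤ q j) (hcap : Fintype.card N ≤ ∑ j, q j)
    (r : ℝ) (hr : r ∈ Set.Icc (0 : ℝ) 1)
    (φ : (N → M ≃ Fin m) → N → M → ℝ) (hφ : Feasible q φ)
    (hloc : LocalPSP φ r) :
    PSP φ (r ^ 2) :=
  local_sufficiency_psp_general hr (fun P => (hφ P).2.1) hloc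
end

section
/- Let M be a finite set of m objects, P^T and P^F preference orders on M, and u a utility function consistent with P^T. For C > 1 define v(j) = C^{m − rank_{P^F}(j)} for j ∈ M. Then for all sufficiently large C, the sequence of preference orders that the line segment co(u,v) = {u_α : α ∈ [0,1]} passes, listed in increasing order of the parameters α at which u_α is consistent with them, is exactly the canonical (bubble-sort) transition from P^T to P^F. -/
open Finset

/-- The convex combination `u_α = (1-α)·u + α·v`. -/
def mix {M : Type*} (u v : M → ℝ) (α : ℝ) : M → ℝ := fun j => (1 - α) * u j + α * v j

/-- Swap object `j` one position upward in the ranking `σ` (i.e. exchange it with the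
object ranked directly above it). -/
def swapUp {M : Type*} [DecidableEq M] {m : ℕ} (σ : M ≃ Fin m) (j : M) : M ≃ Fin m :=
  σ.trans (Equiv.swap (σ j) ⟨(σ j : ℕ) - 1, lt_of_le_of_lt (Nat.sub_le _ 1) (σ j).isLt⟩)

/-- The list of preference orders obtained by swapping object `j` upward `k` times. -/
def moveUp {M : Type*} [DecidableEq M] {m : ℕ} (j : M) :
    (M ≃ Fin m) → ℕ → List (M ≃ Fin m)
  | _, 0 => []
  | σ, k + 1 => swapUp σ j :: moveUp j (swapUp σ j) k

/-- Bubble-sort phases: for each target rank `t` (in increasing order), move the object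
`τ.symm t` from its current position up to position `t`, one swap at a time. -/
def canonFrom {M : Type*} [DecidableEq M] {m : ℕ} (τ : M ≃ Fin m) :
    (M ≃ Fin m) → List (Fin m) → List (M ≃ Fin m)
  | _, [] => []
  | σ, t :: ts =>
      let L := moveUp (τ.symm t) σ ((σ (τ.symm t) : ℕ) - (t : ℕ))
      L ++ canonFrom τ (L.getLast?.getD σ) ts

/-- The canonical (bubble-sort) transition from `σ` to `τ`: the sequence of preference
orders `P⁰ = σ, P¹, …, P^K = τ` produced by the bubble-sort algorithm. -/
def canonicalTransition {M : Type*} [DecidableEq M] {m : ℕ} (σ τ : M ≃ Fin m) :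
    List (M ≃ Fin m) :=
  σ :: canonFrom τ σ (List.finRange m)

/-- The sequence of preference orders that `co(u,v)` passes, listed in increasing order
of the parameter `α`, is exactly the canonical transition from `PT` to `PF`:
a preference order is passed iff it belongs to the canonical transition list, and
the parameters at which consecutive members of the list are passed are increasing. -/
def CanonicalPassing {M : Type*} [DecidableEq M] {m : ℕ}
    (u v : M → ℝ) (PT PF : M ≃ Fin m) : Prop :=
  (∀ P : M ≃ Fin m,
      (∃ α ∈ Set.Icc (0 : ℝ) 1, Consistent (mix u v α) P) ↔
        P ∈ canonicalTransition PT PF) ∧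
  (∀ (k l : ℕ) (hk : k < (canonicalTransition PT PF).length)
      (hl : l < (canonicalTransition PT PF).length), k < l →
    ∀ α α' : ℝ, α ∈ Set.Icc (0 : ℝ) 1 → α' ∈ Set.Icc (0 : ℝ) 1 →
      Consistent (mix u v α) ((canonicalTransition PT PF).get ⟨k, hk⟩) →
      Consistent (mix u v α') ((canonicalTransition PT PF).get ⟨l, hl⟩) →
      α < α')

/-!
Moving along the segment, the utility gap between two objects is affine in `α`, so it changes sign
at most once, and the order of `u_α` changes exactly when a pair of objects is tied. Suppose
bubble sort has put the `t` best objects in place, is lifting the next one, `b`, and `a` stands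
directly above `b`. Follow `u_α` up to the parameter `T` at which `a` and `b` are tied. A pair
already in its final order keeps that order until `α = 1`. A pair `x` above `y` in the wrong order
with `y` different from `b` consists of objects that `P^F` ranks below `b`; when `v` decays fast
enough it is tied only after `T`. Finally `x` above `a` at `T` implies `x` above `b` at `T`, since
`a` and `b` are tied there. Hence `a` and `b` are the only tied pair at `T`, and just after `T` the
order is the one obtained by a single bubble-sort swap.
-/

section Development

open Filter Topology

variable {M : Type*} {m : ℕ} {u v : M → ℝ}

namespace Consistent

variable {w : M → ℝ} {P Q : M ≃ Fin m}

theorem strictAnti_comp_symm (hP : Consistent w P) : StrictAnti (w ∘ P.symm) :=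
  fun i j hij => hP _ _ (by simpa only [Equiv.apply_symm_apply] using hij)

theorem injective (hP : Consistent w P) : Function.Injective w := by
  simpa using hP.strictAnti_comp_symm.injective

theorem unique (hP : Consistent w P) (hQ : Consistent w Q) : P = Q := by
  have hsymm : w ∘ P.symm = w ∘ Q.symm :=
    (hP.strictAnti_comp_symm.range_inj hQ.strictAnti_comp_symm).1 <| by
      rw [P.symm.surjective.range_comp, Q.symm.surjective.range_comp]
  exact Equiv.symm_bijective.injective
    (Equiv.coe_fn_injective (hP.injective.comp_left hsymm))

end Consistent

theorem mix_zero (u v : M → ℝ) : mix u v 0 = u := by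
  funext j
  simp [mix]

theorem mix_one (u v : M → ℝ) : mix u v 1 = v := by
  funext j
  simp [mix]

theorem continuous_mix_apply (u v : M → ℝ) (j : M) : Continuous fun α => mix u v α j := by
  unfold mix
  fun_prop

theorem mix_interpolation (u v : M → ℝ) (α β γ : ℝ) (j : M) :
    (γ - α) * mix u v β j = (γ - β) * mix u v α j + (β - α) * mix u v γ j := by
  simp only [mix]
  ring

theorem mix_lt_mix_of_lt_of_le {α β γ : ℝ} {a b : M} (hαβ : α < β) (hβγ : β < γ)
    (hα : mix u v α b < mix u v α a) (hγ : mix u v γ b ≤ mix u v γ a) :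
    mix u v β b < mix u v β a := by
  refine lt_of_mul_lt_mul_left ?_ (sub_nonneg.2 (hαβ.trans hβγ).le)
  rw [mix_interpolation u v α β γ a, mix_interpolation u v α β γ b]
  exact add_lt_add_of_lt_of_le (mul_lt_mul_of_pos_left hα (sub_pos.2 hβγ))
    (mul_le_mul_of_nonneg_left hγ (sub_pos.2 hαβ).le)

theorem mix_lt_mix_of_le_of_lt {α β γ : ℝ} {a b : M} (hαβ : α < β) (hβγ : β < γ)
    (hα : mix u v α b ≤ mix u v α a) (hγ : mix u v γ b < mix u v γ a) :
    mix u v β b < mix u v β a := by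
  refine lt_of_mul_lt_mul_left ?_ (sub_nonneg.2 (hαβ.trans hβγ).le)
  rw [mix_interpolation u v α β γ a, mix_interpolation u v α β γ b]
  exact add_lt_add_of_le_of_lt (mul_le_mul_of_nonneg_left hα (sub_pos.2 hβγ).le)
    (mul_lt_mul_of_pos_left hγ (sub_pos.2 hαβ))

theorem lt_of_mix_lt_mix {α : ℝ} {a b : M} (hα₀ : 0 < α) (hα₁ : α < 1)
    (hα : mix u v α b < mix u v α a) (hv : v a < v b) : u b < u a := by
  by_contra! hu
  refine hα.not_gt (mix_lt_mix_of_le_of_lt hα₀ hα₁ ?_ ?_)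
  · rwa [mix_zero]
  · rwa [mix_one]

theorem exists_mix_eq_mix {α : ℝ} {a b : M} (hα₁ : α < 1) (hα : mix u v α b < mix u v α a)
    (hv : v a < v b) : ∃ T ∈ Set.Ioo α 1, mix u v T a = mix u v T b := by
  have hgap : Continuous fun β => mix u v β a - mix u v β b :=
    (continuous_mix_apply u v a).sub (continuous_mix_apply u v b)
  have hzero : (0 : ℝ) ∈ Set.Ioo (mix u v 1 a - mix u v 1 b) (mix u v α a - mix u v α b) := by
    rw [mix_one]
    exact ⟨sub_neg.2 hv, sub_pos.2 hα⟩
  obtain ⟨T, hT, htie⟩ := intermediate_value_Ioo' hα₁.le hgap.continuousOn hzero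
  exact ⟨T, hT, sub_eq_zero.1 htie⟩

theorem eventually_forall_mix_lt_mix [Finite M] {T : ℝ} {R : M → M → Prop}
    (hR : ∀ x y, R x y → mix u v T y < mix u v T x) :
    ∀ᶠ α in 𝓝 T, ∀ x y, R x y → mix u v α y < mix u v α x :=
  eventually_all.2 fun x => eventually_all.2 fun y => eventually_imp_distrib_left.2 fun hxy =>
    (continuous_mix_apply u v y).continuousAt.eventually_lt
      (continuous_mix_apply u v x).continuousAt (hR x y hxy)

theorem Consistent.mix_of_lt_of_lt {P : M ≃ Fin m} {α β γ : ℝ}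
    (hα : Consistent (mix u v α) P) (hγ : Consistent (mix u v γ) P) (hαβ : α < β) (hβγ : β < γ) :
    Consistent (mix u v β) P :=
  fun a b hab => mix_lt_mix_of_lt_of_le hαβ hβγ (hα a b hab) (hγ a b hab).le

/-- The segment `co(u,v)`, restricted to parameters in `(s, 1]`, runs through the orders in the
list one after another: there are breakpoints `s < T₁ < T₂ < ⋯ < 1`, at which `u_α` is consistent
with no order, and between which it is consistent with the respective member of the list. -/
inductive PassesInOrder (u v : M → ℝ) : ℝ → List (M ≃ Fin m) → Prop
  | last {s : ℝ} {P : M ≃ Fin m} (hs : s < 1)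
      (hP : ∀ α ∈ Set.Ioc s 1, Consistent (mix u v α) P) : PassesInOrder u v s [P]
  | cons {s T : ℝ} {P : M ≃ Fin m} {L : List (M ≃ Fin m)} (hsT : s < T)
      (hP : ∀ α ∈ Set.Ioo s T, Consistent (mix u v α) P)
      (hT : ∀ Q : M ≃ Fin m, ¬ Consistent (mix u v T) Q) (hL : PassesInOrder u v T L) :
      PassesInOrder u v s (P :: L)

namespace PassesInOrder

variable {s : ℝ} {L : List (M ≃ Fin m)}

theorem lt_one (h : PassesInOrder u v s L) : s < 1 := by
  induction h with
  | last hs _ => exact hs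
  | cons hsT _ _ _ hT₁ => exact hsT.trans hT₁

theorem exists_consistent (h : PassesInOrder u v s L) :
    ∀ P ∈ L, ∃ α ∈ Set.Ioc s 1, Consistent (mix u v α) P := by
  induction h with
  | last hs hP =>
    intro Q hQ
    rw [List.mem_singleton.1 hQ]
    exact ⟨1, ⟨hs, le_rfl⟩, hP 1 ⟨hs, le_rfl⟩⟩
  | cons hsT hP _ hL ih =>
    intro Q hQ
    rcases List.mem_cons.1 hQ with rfl | hQ
    · obtain ⟨α, hα⟩ := exists_between hsT
      exact ⟨α, ⟨hα.1, (hα.2.trans hL.lt_one).le⟩, hP α hα⟩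
    · obtain ⟨α, hα, hαQ⟩ := ih Q hQ
      exact ⟨α, ⟨hsT.trans hα.1, hα.2⟩, hαQ⟩

theorem mem_of_consistent (h : PassesInOrder u v s L) {α : ℝ} {Q : M ≃ Fin m}
    (hα : α ∈ Set.Ioc s 1) (hQ : Consistent (mix u v α) Q) : Q ∈ L := by
  induction h with
  | last _ hP => exact List.mem_singleton.2 (hQ.unique (hP α hα))
  | @cons s T P L _ hP hT _ ih =>
    rcases lt_trichotomy α T with hαT | rfl | hTα
    · exact List.mem_cons.2 (.inl (hQ.unique (hP α ⟨hα.1, hαT⟩)))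
    · exact absurd hQ (hT Q)
    · exact List.mem_cons_of_mem P (ih ⟨hTα, hα.2⟩)

-- Both orders are met on their own side of a breakpoint, which convexity forbids them to cross.
theorem pairwise_lt (h : PassesInOrder u v s L) :
    L.Pairwise fun P Q => ∀ α β, Consistent (mix u v α) P → Consistent (mix u v β) Q → α < β := by
  induction h with
  | last => exact List.pairwise_singleton _ _
  | @cons s T P L hsT hP hT hL ih =>
    refine List.Pairwise.cons (fun Q hQ α β hα hβ => ?_) ih
    obtain ⟨α', hα'⟩ := exists_between hsT
    obtain ⟨β', hβ', hβ'Q⟩ := hL.exists_consistent Q hQ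
    have hαT : α ≤ T := le_of_not_gt fun hTα =>
      hT P ((hP α' hα').mix_of_lt_of_lt hα hα'.2 hTα)
    have hTβ : T ≤ β := le_of_not_gt fun hβT =>
      hT Q (hβ.mix_of_lt_of_lt hβ'Q hβT hβ'.1)
    refine (hαT.trans hTβ).lt_of_ne fun hαβ => ?_
    exact hT P (le_antisymm hαT (hαβ ▸ hTβ) ▸ hα)

theorem canonicalPassing [DecidableEq M] {PT PF : M ≃ Fin m} (hu : Consistent u PT)
    (h : PassesInOrder u v 0 (canonicalTransition PT PF)) : CanonicalPassing u v PT PF := by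
  refine ⟨fun P => ⟨?_, fun hP => ?_⟩, fun k l hk hl hkl α β _ _ hα hβ => ?_⟩
  · rintro ⟨α, ⟨hα₀, hα₁⟩, hP⟩
    rcases hα₀.eq_or_lt with rfl | hα₀
    · rw [mix_zero] at hP
      exact List.mem_cons.2 (.inl (hP.unique hu))
    · exact h.mem_of_consistent ⟨hα₀, hα₁⟩ hP
  · obtain ⟨α, hα, hαP⟩ := h.exists_consistent P hP
    exact ⟨α, Set.Ioc_subset_Icc_self hα, hαP⟩
  · exact List.pairwise_iff_get.1 h.pairwise_lt ⟨k, hk⟩ ⟨l, hl⟩ hkl α β hα hβ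

end PassesInOrder

/-- The ranking `σ` already agrees with the target `PF` on its `t` best objects; this is what
bubble sort has achieved when it starts to lift the object of target rank `t` (counted from `0`). -/
def SortedUpTo (PF σ : M ≃ Fin m) (t : ℕ) : Prop :=
  ∀ j, (PF j : ℕ) < t → σ j = PF j

namespace SortedUpTo

variable {PF σ : M ≃ Fin m} {t : ℕ}

theorem le_iff (h : SortedUpTo PF σ t) (j : M) : t ≤ (σ j : ℕ) ↔ t ≤ (PF j : ℕ) := by
  refine ⟨fun hσ => ?_, fun hF => ?_⟩ <;> by_contra! hlt
  · rw [h j hlt] at hσ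
    exact hσ.not_gt hlt
  · have hj : σ (PF.symm (σ j)) = σ j := by
      simpa only [Equiv.apply_symm_apply] using h (PF.symm (σ j)) (by simpa using hlt)
    have hσj : σ j = PF j := (PF.symm_apply_eq).1 (σ.injective hj)
    exact hF.not_gt (hσj ▸ hlt)

theorem le_of_inverted (h : SortedUpTo PF σ t) {x y : M} (hσ : σ x < σ y) (hF : PF y < PF x) :
    t ≤ (PF y : ℕ) := by
  by_contra! hy
  have hx : (PF x : ℕ) < t := by
    rw [← not_le, ← h.le_iff, not_le]
    exact (Fin.lt_def.1 hσ).trans (by rwa [h y hy])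
  rw [h x hx, h y hy] at hσ
  exact hσ.not_gt hF

theorem succ (h : SortedUpTo PF σ t) {b : M} (hFb : (PF b : ℕ) = t) (hσb : (σ b : ℕ) = t) :
    SortedUpTo PF σ (t + 1) := by
  intro j hj
  rcases (Nat.lt_succ_iff.1 hj).lt_or_eq with hlt | heq
  · exact h j hlt
  · rw [PF.injective (Fin.ext (heq.trans hFb.symm))]
    exact Fin.ext (hσb.trans hFb.symm)

theorem eq_target (h : SortedUpTo PF σ m) : σ = PF :=
  Equiv.ext fun j => h j (PF j).isLt

theorem swapUp [DecidableEq M] (h : SortedUpTo PF σ t) {b : M} (hb : t < (σ b : ℕ)) :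
    SortedUpTo PF (swapUp σ b) t := by
  intro j hj
  have hσj := h j hj
  rw [← hσj] at hj
  rw [← hσj]
  exact Equiv.swap_apply_of_ne_of_ne (Fin.ne_of_val_ne (by lia)) (Fin.ne_of_val_ne (by grind))

end SortedUpTo

theorem val_swapUp_self [DecidableEq M] (σ : M ≃ Fin m) (b : M) :
    (swapUp σ b b : ℕ) = (σ b : ℕ) - 1 := by
  simp [swapUp]

theorem lt_of_swapUp_lt_swapUp [DecidableEq M] {σ : M ≃ Fin m} {a b x y : M}
    (hab : (σ a : ℕ) + 1 = σ b) (hxy : swapUp σ b x < swapUp σ b y) :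
    (x = b ∧ y = a) ∨ (σ x < σ y ∧ ¬ (x = a ∧ y = b)) := by
  have ha : σ a = ⟨(σ b : ℕ) - 1, by lia⟩ := Fin.ext (by simp [← hab])
  simp only [swapUp, Equiv.trans_apply, ← ha, Equiv.swap_apply_def, σ.injective.eq_iff] at hxy
  have hxa : σ x = σ a → x = a := fun heq => σ.injective heq
  have hyb : σ y = σ b → y = b := fun heq => σ.injective heq
  grind

/-- Inversions with a better target object are resolved first: if `a`, `b` and `x`, `y` are pairs
which `u` ranks in the order opposite to `PF`, and the `PF`-better object `b` of the first beats
that of the second, then `u_α` ties `a`, `b` at a smaller parameter than `x`, `y`. A pair is tied at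
`α / (1 - α) = (u a - u b) / (v b - v a)`; the comparison of two such ratios is stated with the
denominators cleared. -/
def TiesInTargetOrder (u v : M → ℝ) (PF : M ≃ Fin m) : Prop :=
  ∀ a b x y, PF b < PF a → PF b < PF y → PF y < PF x → u b < u a → u y < u x →
    (u a - u b) * (v y - v x) < (u x - u y) * (v b - v a)

theorem TiesInTargetOrder.mix_lt_mix {PF : M ≃ Fin m} (h : TiesInTargetOrder u v PF) {T : ℝ}
    {a b x y : M} (hT : 0 < T) (htie : mix u v T a = mix u v T b) (hba : PF b < PF a)
    (hby : PF b < PF y) (hyx : PF y < PF x) (hab : u b < u a) (hxy : u y < u x) :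
    mix u v T y < mix u v T x := by
  have htie' : (1 - T) * (u a - u b) = T * (v b - v a) := by
    simp only [mix] at htie
    linarith
  have hgap : (u a - u b) * (T * (v y - v x)) < (u a - u b) * ((1 - T) * (u x - u y)) := by
    calc (u a - u b) * (T * (v y - v x)) = T * ((u a - u b) * (v y - v x)) := by ring
      _ < T * ((u x - u y) * (v b - v a)) :=
        mul_lt_mul_of_pos_left (h a b x y hba hby hyx hab hxy) hT
      _ = (u x - u y) * (T * (v b - v a)) := by ring
      _ = (u a - u b) * ((1 - T) * (u x - u y)) := by rw [← htie']; ring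
  have hdiff := lt_of_mul_lt_mul_left hgap (sub_pos.2 hab).le
  simp only [mix]
  linarith

/-- The situation bubble sort is in while it lifts the object of target rank `t`, seen from the
segment: just after the parameter `s`, the utility `u_α` is consistent with the current order
`σ`. -/
structure LiftState (u v : M → ℝ) (PF σ : M ≃ Fin m) (t : ℕ) (s : ℝ) : Prop where
  nonneg : 0 ≤ s
  lt_one : s < 1
  sorted : SortedUpTo PF σ t
  eventually_consistent : ∀ᶠ α in 𝓝[>] s, Consistent (mix u v α) σ

namespace LiftState

variable {PF σ : M ≃ Fin m} {t : ℕ} {s : ℝ}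

theorem consistent_mix_of_lt (h : LiftState u v PF σ t s) {α T : ℝ}
    (hT : ∀ x y, σ x < σ y → mix u v T y ≤ mix u v T x) (hα : α ∈ Set.Ioo s T) :
    Consistent (mix u v α) σ := by
  obtain ⟨β, hβ, hsβ⟩ := (h.eventually_consistent.and (Ioo_mem_nhdsGT hα.1)).exists
  exact fun x y hxy => mix_lt_mix_of_lt_of_le hsβ.2 hα.2 (hβ x y hxy) (hT x y hxy)

theorem exists_consistent (h : LiftState u v PF σ t s) :
    ∃ α ∈ Set.Ioo s 1, Consistent (mix u v α) σ := by
  obtain ⟨α, hα, hsα⟩ := (h.eventually_consistent.and (Ioo_mem_nhdsGT h.lt_one)).exists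
  exact ⟨α, hsα, hα⟩

end LiftState

section Swap

variable {PF σ : M ≃ Fin m} {t : ℕ} {a b : M}

theorem SortedUpTo.target_lt_of_above (h : SortedUpTo PF σ t) (hb : (PF b : ℕ) = t)
    (htb : t < (σ b : ℕ)) (hab : (σ a : ℕ) + 1 = σ b) : PF b < PF a := by
  have hne : (PF a : ℕ) ≠ PF b := fun heq => by
    rw [PF.injective (Fin.ext heq)] at hab
    lia
  have hta : t ≤ (PF a : ℕ) := (h.le_iff a).1 (by lia)
  exact Fin.lt_def.2 (by lia)

theorem mix_lt_mix_at_next_tie (hv : Consistent v PF) (hties : TiesInTargetOrder u v PF)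
    (hsorted : SortedUpTo PF σ t) (hb : (PF b : ℕ) = t) (htb : t < (σ b : ℕ))
    (hab : (σ a : ℕ) + 1 = σ b) {α T : ℝ} (hα₀ : 0 < α) (hαT : α < T) (hT₁ : T < 1)
    (hα : Consistent (mix u v α) σ) (htie : mix u v T a = mix u v T b) :
    ∀ x y, σ x < σ y ∧ ¬ (x = a ∧ y = b) → mix u v T y < mix u v T x := by
  have hba : PF b < PF a := hsorted.target_lt_of_above hb htb hab
  have hσab : σ a < σ b := Fin.lt_def.2 (by lia)
  have initial_lt : ∀ {x y}, σ x < σ y → PF y < PF x → u y < u x := fun hxy hyx =>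
    lt_of_mix_lt_mix hα₀ (hαT.trans hT₁) (hα _ _ hxy) (hv _ _ hyx)
  have lt_of_ne_lifted : ∀ x y, σ x < σ y → y ≠ b → mix u v T y < mix u v T x := by
    intro x y hxy hyb
    rcases lt_trichotomy (PF x) (PF y) with hF | hF | hF
    · refine mix_lt_mix_of_lt_of_le hαT hT₁ (hα x y hxy) ?_
      simpa only [mix_one] using (hv x y hF).le
    · exact absurd (PF.injective hF) (σ.injective.ne_iff.1 hxy.ne)
    · have hby : PF b < PF y := lt_of_le_of_ne
        (Fin.le_def.2 (hb.trans_le (hsorted.le_of_inverted hxy hF))) (PF.injective.ne hyb.symm)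
      exact hties.mix_lt_mix (hα₀.trans hαT) htie hba hby hF (initial_lt hσab hba)
        (initial_lt hxy hF)
  rintro x y ⟨hxy, hne⟩
  by_cases hyb : y = b
  · subst hyb
    have hxa : σ x ≠ σ a := fun heq => hne ⟨σ.injective heq, rfl⟩
    have hσxa : σ x < σ a := by lia
    exact htie ▸ lt_of_ne_lifted x a hσxa (σ.injective.ne_iff.1 hσab.ne)
  · exact lt_of_ne_lifted x y hxy hyb

theorem eventually_consistent_swapUp [DecidableEq M] {T : ℝ} (hT₁ : T < 1)
    (hab : (σ a : ℕ) + 1 = σ b) (hv : v a < v b) (htie : mix u v T a = mix u v T b)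
    (hlt : ∀ x y, σ x < σ y ∧ ¬ (x = a ∧ y = b) → mix u v T y < mix u v T x) :
    ∀ᶠ α in 𝓝[>] T, Consistent (mix u v α) (swapUp σ b) := by
  have : Finite M := Finite.of_equiv _ σ.symm
  filter_upwards [(eventually_forall_mix_lt_mix hlt).filter_mono nhdsWithin_le_nhds,
    Ioo_mem_nhdsGT hT₁] with α hα hTα x y hxy
  rcases lt_of_swapUp_lt_swapUp hab hxy with ⟨rfl, rfl⟩ | hxy
  · exact mix_lt_mix_of_le_of_lt hTα.1 hTα.2 htie.le (by rwa [mix_one])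
  · exact hα x y hxy

theorem LiftState.exists_swap [DecidableEq M] {s : ℝ} (h : LiftState u v PF σ t s)
    (hv : Consistent v PF) (hties : TiesInTargetOrder u v PF) (hb : (PF b : ℕ) = t)
    (htb : t < (σ b : ℕ)) :
    ∃ T, s < T ∧ (∀ α ∈ Set.Ioo s T, Consistent (mix u v α) σ) ∧
      (∀ Q : M ≃ Fin m, ¬ Consistent (mix u v T) Q) ∧ LiftState u v PF (swapUp σ b) t T := by
  obtain ⟨a, ha⟩ : ∃ a, σ a = ⟨(σ b : ℕ) - 1, by lia⟩ := σ.surjective _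
  have hab : (σ a : ℕ) + 1 = σ b := by grind
  have hσab : σ a < σ b := Fin.lt_def.2 (by lia)
  have hvab : v a < v b := hv b a (h.sorted.target_lt_of_above hb htb hab)
  obtain ⟨α, ⟨hsα, hα₁⟩, hα⟩ := h.exists_consistent
  obtain ⟨T, ⟨hαT, hT₁⟩, htie⟩ := exists_mix_eq_mix hα₁ (hα a b hσab) hvab
  have hlt := mix_lt_mix_at_next_tie hv hties h.sorted hb htb hab (h.nonneg.trans_lt hsα) hαT hT₁
    hα htie
  have hle : ∀ x y, σ x < σ y → mix u v T y ≤ mix u v T x := by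
    intro x y hxy
    by_cases hxy' : x = a ∧ y = b
    · rw [hxy'.1, hxy'.2, htie]
    · exact (hlt x y ⟨hxy, hxy'⟩).le
  have hsT : s < T := hsα.trans hαT
  exact ⟨T, hsT, fun β hβ => h.consistent_mix_of_lt hle hβ,
    fun Q hQ => hσab.ne (congrArg σ (hQ.injective htie)),
    ⟨h.nonneg.trans hsT.le, hT₁, h.sorted.swapUp htb,
      eventually_consistent_swapUp hT₁ hab hvab htie hlt⟩⟩

end Swap

section BubbleSort

variable [DecidableEq M] {PF : M ≃ Fin m}

theorem passesInOrder_moveUp_append (hv : Consistent v PF) (hties : TiesInTargetOrder u v PF)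
    {t : ℕ} {b : M} (hb : (PF b : ℕ) = t) {ts : List (Fin m)}
    (hnext : ∀ σ s, LiftState u v PF σ (t + 1) s →
      PassesInOrder u v s (σ :: canonFrom PF σ ts)) (k : ℕ) :
    ∀ (σ : M ≃ Fin m) (s : ℝ), LiftState u v PF σ t s → (σ b : ℕ) = t + k →
      PassesInOrder u v s
        (σ :: (moveUp b σ k ++ canonFrom PF ((moveUp b σ k).getLast?.getD σ) ts)) := by
  induction k with
  | zero =>
    intro σ s h hσb
    exact hnext σ s ⟨h.nonneg, h.lt_one, h.sorted.succ hb hσb, h.eventually_consistent⟩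
  | succ k ih =>
    intro σ s h hσb
    obtain ⟨T, hsT, hσ, hT, hswap⟩ := h.exists_swap hv hties hb (by lia)
    simp only [moveUp, List.cons_append, List.getLast?_cons, Option.getD_some]
    exact .cons hsT hσ hT (ih (swapUp σ b) T hswap (by rw [val_swapUp_self]; lia))

theorem passesInOrder_canonFrom (hv : Consistent v PF) (hties : TiesInTargetOrder u v PF)
    {t : ℕ} (ht : t ≤ m) :
    ∀ (σ : M ≃ Fin m) (s : ℝ), LiftState u v PF σ t s →
      PassesInOrder u v s (σ :: canonFrom PF σ ((List.finRange m).drop t)) := by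
  induction ht using Nat.decreasingInduction with
  | self =>
    intro σ s h
    obtain rfl := h.sorted.eq_target
    have hone : Consistent (mix u v 1) σ := by rwa [mix_one]
    rw [List.drop_of_length_le (List.length_finRange).le]
    refine .last h.lt_one fun α hα => ?_
    rcases hα.2.eq_or_lt with rfl | hα₁
    · exact hone
    · exact h.consistent_mix_of_lt (fun x y hxy => (hone x y hxy).le) ⟨hα.1, hα₁⟩
  | of_succ t ht ih =>
    intro σ s h
    rw [List.drop_eq_getElem_cons (by rwa [List.length_finRange]), List.getElem_finRange]
    have hb : (PF (PF.symm ⟨t, ht⟩) : ℕ) = t := by rw [Equiv.apply_symm_apply]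
    have hσb : t ≤ (σ (PF.symm ⟨t, ht⟩) : ℕ) := (h.sorted.le_iff _).2 hb.ge
    exact passesInOrder_moveUp_append hv hties hb ih _ σ s h (Nat.add_sub_of_le hσb).symm

theorem canonicalPassing_of_tiesInTargetOrder {PT : M ≃ Fin m} (hu : Consistent u PT)
    (hv : Consistent v PF) (hties : TiesInTargetOrder u v PF) : CanonicalPassing u v PT PF := by
  have : Finite M := Finite.of_equiv _ PT.symm
  have hstart : ∀ᶠ α in 𝓝[>] (0 : ℝ), Consistent (mix u v α) PT :=
    (eventually_forall_mix_lt_mix (by rwa [mix_zero])).filter_mono nhdsWithin_le_nhds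
  have hstate : LiftState u v PF PT 0 0 :=
    ⟨le_rfl, one_pos, fun j hj => absurd hj (Nat.not_lt_zero _), hstart⟩
  exact (passesInOrder_canonFrom hv hties (Nat.zero_le m) PT 0 hstate).canonicalPassing hu

end BubbleSort

theorem exists_sub_le_mul_sub [Finite M] (u : M → ℝ) :
    ∃ K, ∀ a b x y, u y < u x → u a - u b ≤ K * (u x - u y) := by
  obtain ⟨K, hK⟩ := (Set.finite_range fun p : (M × M) × (M × M) =>
    (u p.1.1 - u p.1.2) / (u p.2.1 - u p.2.2)).bddAbove
  exact ⟨K, fun a b x y hxy => (div_le_iff₀ (sub_pos.2 hxy)).1 (hK ⟨((a, b), (x, y)), rfl⟩)⟩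

theorem tiesInTargetOrder_of_decay {PF : M ≃ Fin m} {K C : ℝ} (hC : 1 ≤ C) (hKC : K < C - 1)
    (hK : ∀ a b x y, u y < u x → u a - u b ≤ K * (u x - u y)) (hv₀ : ∀ j, 0 ≤ v j)
    (hv : Consistent v PF) (hdecay : ∀ a b, PF a < PF b → C * v b ≤ v a) :
    TiesInTargetOrder u v PF := by
  intro a b x y hba hby hyx _ hxy
  have hu : u a - u b < (C - 1) * (u x - u y) :=
    (hK a b x y hxy).trans_lt (mul_lt_mul_of_pos_right hKC (sub_pos.2 hxy))
  have hvb : (C - 1) * v y ≤ v b - v a := by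
    refine le_of_mul_le_mul_left ?_ (zero_lt_one.trans_le hC)
    calc C * ((C - 1) * v y) = (C - 1) * (C * v y) := by ring
      _ ≤ (C - 1) * v b := mul_le_mul_of_nonneg_left (hdecay b y hby) (sub_nonneg.2 hC)
      _ ≤ C * (v b - v a) := by linarith [hdecay b a hba]
  calc (u a - u b) * (v y - v x) < (C - 1) * (u x - u y) * (v y - v x) :=
        mul_lt_mul_of_pos_right hu (sub_pos.2 (hv y x hyx))
    _ ≤ (C - 1) * (u x - u y) * v y :=
        mul_le_mul_of_nonneg_left (sub_le_self _ (hv₀ x))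
          (mul_nonneg (sub_nonneg.2 hC) (sub_pos.2 hxy).le)
    _ = (u x - u y) * ((C - 1) * v y) := by ring
    _ ≤ (u x - u y) * (v b - v a) := mul_le_mul_of_nonneg_left hvb (sub_pos.2 hxy).le

theorem consistent_pow_sub_rank (P : M ≃ Fin m) {C : ℝ} (hC : 1 < C) :
    Consistent (fun j => C ^ (m - 1 - (P j : ℕ))) P :=
  fun a b hab => pow_lt_pow_right₀ hC (by lia)

theorem mul_pow_sub_rank_le (P : M ≃ Fin m) {C : ℝ} (hC : 1 ≤ C) {a b : M} (hab : P a < P b) :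
    C * C ^ (m - 1 - (P b : ℕ)) ≤ C ^ (m - 1 - (P a : ℕ)) := by
  rw [← pow_succ']
  exact pow_le_pow_right₀ hC (by lia)

theorem segment_induces_canonical_transition_general [DecidableEq M] (PT PF : M ≃ Fin m)
    (hu : Consistent u PT) :
    ∃ C₀ : ℝ, 1 < C₀ ∧ ∀ C : ℝ, C₀ ≤ C → ∀ v : M → ℝ, (∀ j, 0 ≤ v j) → Consistent v PF →
      (∀ a b, PF a < PF b → C * v b ≤ v a) → CanonicalPassing u v PT PF := by
  have : Finite M := Finite.of_equiv _ PT.symm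
  obtain ⟨K, hK⟩ := exists_sub_le_mul_sub u
  refine ⟨max 2 (K + 2), by simp, fun C hC v hv₀ hv hdecay => ?_⟩
  obtain ⟨hC₂, hKC⟩ := max_le_iff.1 hC
  exact canonicalPassing_of_tiesInTargetOrder hu hv
    (tiesInTargetOrder_of_decay (by linarith) (by linarith) hK hv₀ hv hdecay)

end Development

/-- **Claim 2.** Let `u` be consistent with `P^T` and, for `C > 1`, let
`v(j) = C^(m - rank_{P^F}(j))`. For all sufficiently large `C`, the sequence of
preference orders passed by the segment `co(u,v)`, in increasing order of `α`,
is exactly the canonical (bubble-sort) transition from `P^T` to `P^F`. -/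
theorem segment_induces_canonical_transition
    {M : Type*} [Fintype M] [DecidableEq M] {m : ℕ} (hm : Fintype.card M = m)
    (PT PF : M ≃ Fin m) (u : M → ℝ) (hu0 : ∀ j, 0 ≤ u j) (huc : Consistent u PT) :
    ∃ C₀ : ℝ, 1 < C₀ ∧ ∀ C : ℝ, C₀ ≤ C →
      CanonicalPassing u (fun j => C ^ (m - 1 - (PF j : ℕ))) PT PF := by
  obtain ⟨C₀, hC₀, hpass⟩ := segment_induces_canonical_transition_general PT PF huc
  refine ⟨C₀, hC₀, fun C hC => ?_⟩
  have hC₁ : 1 < C := hC₀.trans_le hC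
  exact hpass C hC _ (fun j => by positivity) (consistent_pow_sub_rank PF hC₁)
    fun a b => mul_pow_sub_rank_le PF hC₁.le
end

section
/- Let M be a finite set of objects, r ∈ [0,1], and u, v : M → ℝ≥0 utility functions both satisfying URBI(r). Let a,b ∈ M be objects with u(a) > u(b) and v(a) > v(b). Then for every α ∈ [0,1], writing u_α = (1−α)u + αv, we have u_α(b) − min_{j∈M} u_α(j) ≤ r·(u_α(a) − min_{j∈M} u_α(j)). -/
open Finset

/-!
For fixed `r`, the constraint `y - m ≤ r * (x - m)` is linear in `(x, y, m)`, so the mixture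
satisfies it with `m` the mixture of the two infima. By concavity of the infimum, this `m` is at
most the infimum of the mixture, and as `r ≤ 1`, raising `m` only weakens the constraint.
-/

theorem sub_le_mul_sub_of_le {R : Type*} [Ring R] [PartialOrder R] [IsOrderedRing R]
    {r x y m m' : R} (hr : r ≤ 1) (hm : m ≤ m') (h : y - m ≤ r * (x - m)) :
    y - m' ≤ r * (x - m') :=
  calc y - m' = (y - m) - (m' - m) := (sub_sub_sub_cancel_right y m' m).symm
    _ ≤ r * (x - m) - r * (m' - m) :=
        sub_le_sub h (mul_le_of_le_one_left (sub_nonneg.2 hm) hr)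
    _ = r * (x - m') := by rw [← mul_sub, sub_sub_sub_cancel_right]

theorem minU_eq_iInf {M : Type*} [Fintype M] [Nonempty M] (u : M → ℝ) : minU u = ⨅ j, u j :=
  Finset.inf'_univ_eq_ciInf u

section Mix

variable {M : Type*} {u v : M → ℝ} {α : ℝ}

theorem mix_iInf_le_iInf_mix [Nonempty M] (hu : BddBelow (Set.range u))
    (hv : BddBelow (Set.range v)) (hα : α ∈ Set.Icc (0 : ℝ) 1) :
    (1 - α) * (⨅ j, u j) + α * (⨅ j, v j) ≤ ⨅ j, mix u v α j :=
  le_ciInf fun j => add_le_add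
    (mul_le_mul_of_nonneg_left (ciInf_le hu j) (sub_nonneg.2 hα.2))
    (mul_le_mul_of_nonneg_left (ciInf_le hv j) hα.1)

theorem mix_sub_le_mul_mix_sub {r m n : ℝ} {a b : M} (hα : α ∈ Set.Icc (0 : ℝ) 1)
    (hu : u b - m ≤ r * (u a - m)) (hv : v b - n ≤ r * (v a - n)) :
    mix u v α b - ((1 - α) * m + α * n) ≤ r * (mix u v α a - ((1 - α) * m + α * n)) :=
  calc mix u v α b - ((1 - α) * m + α * n)
      = (1 - α) * (u b - m) + α * (v b - n) := by rw [mix]; ring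
    _ ≤ (1 - α) * (r * (u a - m)) + α * (r * (v a - n)) :=
        add_le_add (mul_le_mul_of_nonneg_left hu (sub_nonneg.2 hα.2))
          (mul_le_mul_of_nonneg_left hv hα.1)
    _ = r * (mix u v α a - ((1 - α) * m + α * n)) := by rw [mix]; ring

theorem urbi_along_segment_no_swap_general {r : ℝ} (hr : r ≤ 1)
    (hu : BddBelow (Set.range u)) (hv : BddBelow (Set.range v)) {a b : M}
    (hu_ab : u b - (⨅ j, u j) ≤ r * (u a - ⨅ j, u j))
    (hv_ab : v b - (⨅ j, v j) ≤ r * (v a - ⨅ j, v j)) (hα : α ∈ Set.Icc (0 : ℝ) 1) :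
    mix u v α b - (⨅ j, mix u v α j) ≤ r * (mix u v α a - ⨅ j, mix u v α j) := by
  have : Nonempty M := ⟨a⟩
  exact sub_le_mul_sub_of_le hr (mix_iInf_le_iInf_mix hu hv hα)
    (mix_sub_le_mul_mix_sub hα hu_ab hv_ab)

end Mix

/-- **Claim 4 (URBI(r) is preserved along the segment for unswapped pairs).**
If `u` and `v` both satisfy `URBI(r)` and both rank `a` above `b` (i.e. `u(a) > u(b)`
and `v(a) > v(b)`), then for every `α ∈ [0,1]` the convex combination `u_α` satisfies
the `URBI(r)` constraint for `a` over `b`. -/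
theorem urbi_along_segment_no_swap
    {M : Type*} [Fintype M] [Nonempty M]
    (r : ℝ) (hr : r ∈ Set.Icc (0 : ℝ) 1)
    (u v : M → ℝ) (hu0 : ∀ j, 0 ≤ u j) (hv0 : ∀ j, 0 ≤ v j)
    (huU : URBI u r) (hvU : URBI v r)
    (a b : M) (hu : u b < u a) (hv : v b < v a) :
    ∀ α ∈ Set.Icc (0 : ℝ) 1,
      mix u v α b - minU (mix u v α) ≤ r * (mix u v α a - minU (mix u v α)) := by
  simp only [URBI, minU_eq_iInf] at huU hvU ⊢
  exact fun α hα => urbi_along_segment_no_swap_general hr.2 (Set.finite_range u).bddBelow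
    (Set.finite_range v).bddBelow (huU a b hu) (hvU a b hv) hα
end

section
/- Let M be a finite set of m objects, P^T and P^F preference orders on M, u a utility function consistent with P^T and v a utility function consistent with P^F, such that the line segment co(u,v) makes no simultaneous transitions (there is no α ∈ [0,1] and three pairwise distinct objects with equal value under u_α) and for every pair of objects swapped between P^T and P^F the indifference parameter of u_α is distinct. For objects a,b with u(a) > u(b) and v(a) < v(b), let α(a,b,1) denote the unique α ∈ (0,1) with u_α(a) = u_α(b). Then the following are equivalent: (1) the sequence of preference orders that co(u,v) passes, in increasing order of α, is the canonical (bubble-sort) transition from P^T to P^F; (2) for all objects a,b,c,d with P^T ranking a above b and c above d, and P^F ranking b above a and d above c: (i) if P^F ranks b above d, then α(a,b,1) < α(c,d,1), and (ii) if b = d and P^T ranks c above a, then α(a,b,1) < α(c,d,1). -/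
open Finset

/-- The transition time `α(a,b,1)`: the unique parameter at which
`u_α(a) = u_α(b)` (for `u(a) > u(b)`, `v(a) < v(b)`). -/
noncomputable def transTime {M : Type*} (u v : M → ℝ) (a b : M) : ℝ :=
  (u a - u b) / (u a - u b + v b - v a)

/-!
A preference order is determined by the set of pairs `(a, b)` on which it disagrees with `PT`.
Bubble sort swaps the pairs in inversion between `PT` and `PF` one at a time, ordered first by the
final rank of the object `b` that moves up and then, since `b` climbs from below, by the object `a`
that it overtakes, the one `PT` ranks lowest coming first. An order therefore occurs in the
canonical transition iff its swapped pairs form an initial segment for this ordering. On the other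
hand, the order passed by `co(u, v)` at `α` has swapped exactly the pairs whose transition time is
below `α`. These sublevel sets are the initial segments precisely when the transition times are
strictly increasing for the bubble-sort ordering of the pairs.
-/

section Inversions

variable {M : Type*} {m : ℕ} {PT PF P Q : M ≃ Fin m} {p q : M × M}

/-- The pairs `(a, b)` swapped between two orders: `P` ranks `a` above `b`, and `Q` ranks `b`
above `a`. -/
def inversions (P Q : M ≃ Fin m) : Set (M × M) :=
  {p | P p.1 < P p.2 ∧ Q p.2 < Q p.1}

theorem inversions_self (P : M ≃ Fin m) : inversions P P = ∅ :=
  Set.eq_empty_of_forall_notMem fun _ hp => lt_asymm hp.1 hp.2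

theorem apply_lt_apply_of_inversions_eq (h : inversions PT P = inversions PT Q) {x y : M}
    (hxy : P x < P y) : Q x < Q y := by
  have hne : x ≠ y := ne_of_apply_ne P hxy.ne
  rcases (PT.injective.ne hne).lt_or_gt with hPT | hPT
  · refine (Q.injective.ne hne).lt_or_gt.resolve_right fun hQ => ?_
    have hmem : (x, y) ∈ inversions PT P := h ▸ ⟨hPT, hQ⟩
    exact lt_asymm hxy hmem.2
  · have hmem : (y, x) ∈ inversions PT Q := h ▸ ⟨hPT, hxy⟩
    exact hmem.2

theorem inversions_right_injective (PT : M ≃ Fin m) : Function.Injective (inversions PT) := by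
  intro P Q h
  have hmono : StrictMono (Q ∘ P.symm) := fun i j hij =>
    apply_lt_apply_of_inversions_eq h (by simpa using hij)
  have hid : Q ∘ P.symm = id := (hmono.range_inj strictMono_id).1
    (by rw [(Q.surjective.comp P.symm.surjective).range_eq, Set.range_id])
  ext x
  simpa using (congrArg Fin.val (congrFun hid (P x))).symm

/-- The position of the swap of `p = (a, b)` in the bubble sort from `PT` to `PF`, where `b`
overtakes `a`: lexicographic in the final rank of `b` and the reversed initial rank of `a`. -/
def bubbleKey (PT PF : M ≃ Fin m) (p : M × M) : Fin m ×ₗ (Fin m)ᵒᵈ :=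
  toLex (PF p.2, OrderDual.toDual (PT p.1))

theorem bubbleKey_lt_iff :
    bubbleKey PT PF p < bubbleKey PT PF q ↔
      PF p.2 < PF q.2 ∨ p.2 = q.2 ∧ PT q.1 < PT p.1 := by
  simp [bubbleKey, Prod.Lex.toLex_lt_toLex]

theorem bubbleKey_injective (PT PF : M ≃ Fin m) : Function.Injective (bubbleKey PT PF) := by
  intro p q h
  simpa [bubbleKey, Prod.ext_iff, and_comm] using h

/-- The pairs that the bubble sort from `PT` to `PF` swaps before it swaps `q`. -/
def precedingSwaps (PT PF : M ≃ Fin m) (q : M × M) : Set (M × M) :=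
  {p ∈ inversions PT PF | bubbleKey PT PF p < bubbleKey PT PF q}

theorem notMem_precedingSwaps_self (PT PF : M ≃ Fin m) (q : M × M) :
    q ∉ precedingSwaps PT PF q :=
  fun h => lt_irrefl _ h.2

theorem exists_eq_precedingSwaps {I : Set (M × M)} (hI : I ⊂ inversions PT PF)
    (hlower : ∀ p ∈ inversions PT PF, ∀ q ∈ I,
      bubbleKey PT PF p < bubbleKey PT PF q → p ∈ I) :
    ∃ q ∈ inversions PT PF, I = precedingSwaps PT PF q := by
  have : Finite M := Finite.of_equiv _ PT.symm
  obtain ⟨q, ⟨hq, hqI⟩, hmin⟩ := Set.exists_min_image (inversions PT PF \ I)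
    (bubbleKey PT PF) (Set.toFinite _) (Set.nonempty_of_ssubset hI)
  refine ⟨q, hq, Set.Subset.antisymm (fun p hp => ⟨hI.subset hp, ?_⟩) fun p hp => ?_⟩
  · refine lt_of_le_of_ne (not_lt.1 fun h => hqI (hlower q hq p hp h)) fun h => ?_
    exact hqI (bubbleKey_injective PT PF h ▸ hp)
  · by_contra hpI
    exact (hmin p ⟨hp.1, hpI⟩).not_gt hp.2

end Inversions

section ListChains

variable {X : Type*} {R : X → X → Prop} {x : X} {L L' : List X}

theorem getLast?_getD_append :
    (L ++ L').getLast?.getD x = L'.getLast?.getD (L.getLast?.getD x) := by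
  cases h : L'.getLast? <;> simp [List.getLast?_append, h]

theorem isChain_cons_append (h : (x :: L).IsChain R)
    (h' : (L.getLast?.getD x :: L').IsChain R) : (x :: (L ++ L')).IsChain R := by
  rw [← List.cons_append]
  refine h.append h'.tail fun y hy z hz => ?_
  rw [List.getLast?_cons, Option.mem_some_iff] at hy
  exact hy ▸ (List.isChain_cons.1 h').1 z hz

theorem eq_getLast_or_exists_rel_of_mem_isChain (h : (x :: L).IsChain R) {y : X} (hy : y ∈ x :: L) :
    y = L.getLast?.getD x ∨ ∃ z, R y z := by
  induction L generalizing x with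
  | nil => exact .inl (by simpa using hy)
  | cons z L ih =>
    rw [List.isChain_cons_cons] at h
    rcases List.mem_cons.1 hy with rfl | hy
    · exact .inr ⟨z, h.1⟩
    · simpa [List.getLast?_cons] using ih h.2 hy

theorem exists_mem_rel_not_of_isChain {φ : X → Prop} (h : (x :: L).IsChain R) (hx : ¬ φ x)
    (hlast : φ (L.getLast?.getD x)) : ∃ y ∈ x :: L, ∃ z, R y z ∧ ¬ φ y ∧ φ z := by
  induction L generalizing x with
  | nil => exact absurd hlast hx
  | cons z L ih =>
    rw [List.isChain_cons_cons] at h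
    by_cases hz : φ z
    · exact ⟨x, List.mem_cons_self, z, h.1, hx, hz⟩
    · obtain ⟨y, hy, hy'⟩ := ih h.2 hz (by simpa [List.getLast?_cons] using hlast)
      exact ⟨y, List.mem_cons_of_mem _ hy, hy'⟩

end ListChains

section SwapUp

variable {M : Type*} [DecidableEq M] {m : ℕ} {PT σ : M ≃ Fin m} {a b x y : M}

theorem swapUp_apply_val (hab : (σ b : ℕ) = σ a + 1) (x : M) :
    (swapUp σ b x : ℕ) = if x = b then (σ a : ℕ) else if x = a then (σ b : ℕ) else σ x := by
  have ha : (⟨(σ b : ℕ) - 1, by omega⟩ : Fin m) = σ a := Fin.ext (by simp [hab])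
  simp only [swapUp, ha, Equiv.trans_apply, Equiv.swap_apply_def, σ.injective.eq_iff]
  split_ifs <;> rfl

theorem swapUp_lt_swapUp_iff (hab : (σ b : ℕ) = σ a + 1) (h : (x, y) ≠ (a, b))
    (h' : (x, y) ≠ (b, a)) : swapUp σ b x < swapUp σ b y ↔ σ x < σ y := by
  have hne : ∀ {z w}, z ≠ w → (σ z : ℕ) ≠ σ w := fun hzw =>
    Fin.val_injective.ne (σ.injective.ne hzw)
  rw [Fin.lt_def, Fin.lt_def, swapUp_apply_val hab, swapUp_apply_val hab]
  grind

theorem inversions_swapUp (hab : (σ b : ℕ) = σ a + 1) (hPT : PT a < PT b) :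
    inversions PT (swapUp σ b) = insert (a, b) (inversions PT σ) := by
  ext ⟨x, y⟩
  by_cases hxy : (x, y) = (a, b)
  · obtain ⟨rfl, rfl⟩ := Prod.ext_iff.1 hxy
    have hne : x ≠ y := ne_of_apply_ne PT hPT.ne
    have hswap : swapUp σ y y < swapUp σ y x := by
      rw [Fin.lt_def, swapUp_apply_val hab, swapUp_apply_val hab, if_pos rfl, if_neg hne,
        if_pos rfl, hab]
      exact Nat.lt_succ_self _
    exact iff_of_true ⟨hPT, hswap⟩ (Set.mem_insert _ _)
  · rw [Set.mem_insert_iff, or_iff_right hxy]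
    refine and_congr_right fun hlt => swapUp_lt_swapUp_iff hab (fun h => ?_) fun h => hxy ?_
    · obtain ⟨rfl, rfl⟩ := Prod.ext_iff.1 h
      exact lt_asymm hlt hPT
    · simpa [and_comm] using h

end SwapUp

/-- The invariant of bubble sort: the objects with final rank below `s` are in place, and an object
of final rank at least `t` has not yet overtaken any object of final rank at least `s`. It holds
with `s = t` at the start of phase `t`, and with `t = s + 1` throughout phase `s`. -/
structure BubbleInvariant {M : Type*} {m : ℕ} (PT PF : M ≃ Fin m) (s t : ℕ) (σ : M ≃ Fin m) :
    Prop where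
  apply_eq : ∀ ⦃x⦄, (PF x : ℕ) < s → σ x = PF x
  apply_lt_apply : ∀ ⦃x y⦄, s ≤ (PF x : ℕ) → t ≤ (PF y : ℕ) → PT x < PT y → σ x < σ y

/-- One swap of the bubble sort from `PT` to `PF`, recorded through the pairs that have been
swapped since `PT`. -/
def BubbleStep {M : Type*} {m : ℕ} (PT PF P P' : M ≃ Fin m) : Prop :=
  ∃ q ∈ inversions PT PF, inversions PT P = precedingSwaps PT PF q ∧
    inversions PT P' = insert q (precedingSwaps PT PF q)

theorem BubbleStep.inversions_ssubset {M : Type*} {m : ℕ} {PT PF P P' : M ≃ Fin m}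
    (h : BubbleStep PT PF P P') : inversions PT P ⊂ inversions PT P' := by
  obtain ⟨q, -, hP, hP'⟩ := h
  rw [hP, hP']
  exact Set.ssubset_insert (notMem_precedingSwaps_self PT PF q)

theorem bubbleInvariant_zero {M : Type*} {m : ℕ} (PT PF : M ≃ Fin m) :
    BubbleInvariant PT PF 0 0 PT :=
  ⟨fun _ hx => absurd hx (Nat.not_lt_zero _), fun _ _ _ _ hxy => hxy⟩

namespace BubbleInvariant

variable {M : Type*} {m : ℕ} {PT PF σ : M ≃ Fin m} {s t : ℕ} {a b x y : M}

theorem apply_val_lt_iff (h : BubbleInvariant PT PF s t σ) : (σ x : ℕ) < s ↔ (PF x : ℕ) < s := by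
  refine ⟨fun hx => ?_, fun hx => by rwa [h.apply_eq hx]⟩
  have hσ : σ (PF.symm (σ x)) = σ x := by
    rw [h.apply_eq (by simpa using hx), Equiv.apply_symm_apply]
  rwa [← PF.symm_apply_eq.1 (σ.injective hσ)]

theorem mid_phase (h : BubbleInvariant PT PF t t σ) : BubbleInvariant PT PF t (t + 1) σ :=
  ⟨h.apply_eq, fun _ _ hx hy => h.apply_lt_apply hx (Nat.le_of_succ_le hy)⟩

theorem next_phase (h : BubbleInvariant PT PF (PF b) (PF b + 1) σ) (hb : σ b = PF b) :
    BubbleInvariant PT PF (PF b + 1) (PF b + 1) σ := by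
  refine ⟨fun x hx => ?_, fun x y hx => h.apply_lt_apply (Nat.le_of_succ_le hx)⟩
  rcases (Nat.lt_succ_iff.1 hx).eq_or_lt with hx | hx
  · rw [PF.injective (Fin.ext hx), hb]
  · exact h.apply_eq hx

theorem apply_lt_apply_of_val_lt (h : BubbleInvariant PT PF s t σ) (hy : (PF y : ℕ) < s)
    (hyx : PF y < PF x) : σ y < σ x := by
  rw [h.apply_eq hy]
  by_cases hx : (PF x : ℕ) < s
  · rwa [h.apply_eq hx]
  · exact Fin.lt_def.2 (hy.trans_le (not_lt.1 (h.apply_val_lt_iff.not.2 hx)))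

theorem inversions_subset (h : BubbleInvariant PT PF s (s + 1) σ) :
    inversions PT σ ⊆ inversions PT PF := by
  rintro ⟨x, y⟩ ⟨hPT, hσ⟩
  refine ⟨hPT, not_le.1 fun hxy => ?_⟩
  have hxy : PF x < PF y := hxy.lt_of_ne (PF.injective.ne (ne_of_apply_ne PT hPT.ne))
  by_cases hx : (PF x : ℕ) < s
  · exact lt_asymm hσ (h.apply_lt_apply_of_val_lt hx hxy)
  · exact lt_asymm hσ (h.apply_lt_apply (not_lt.1 hx) ((not_lt.1 hx).trans_lt hxy) hPT)

theorem mem_inversions (h : BubbleInvariant PT PF (PF b) (PF b + 1) σ)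
    (hab : (σ b : ℕ) = σ a + 1) (hb : PF b < σ b) : (a, b) ∈ inversions PT PF := by
  have hne : a ≠ b := by rintro rfl; omega
  have hPF : PF b < PF a := by
    have hle : PF b ≤ PF a := not_lt.1 (h.apply_val_lt_iff.not.1 (by omega))
    exact hle.lt_of_ne (PF.injective.ne hne.symm)
  refine ⟨(PT.injective.ne hne).lt_or_gt.resolve_right fun hPT => ?_, hPF⟩
  have := h.apply_lt_apply le_rfl hPF hPT
  omega

theorem apply_lt_apply_iff (h : BubbleInvariant PT PF (PF b) (PF b + 1) σ)
    (hab : (σ b : ℕ) = σ a + 1) (hb : PF b < σ b) (hx : PF b < PF x) :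
    σ b < σ x ↔ PT a < PT x := by
  have ha : PF b < PF a := (h.mem_inversions hab hb).2
  constructor
  · intro hlt
    have hne : a ≠ x := by rintro rfl; omega
    refine (PT.injective.ne hne).lt_or_gt.resolve_right fun hPT => ?_
    have := h.apply_lt_apply hx.le ha hPT
    omega
  · intro hPT
    have hax := h.apply_lt_apply ha.le hx hPT
    have hne : (σ x : ℕ) ≠ σ b :=
      Fin.val_injective.ne (σ.injective.ne (ne_of_apply_ne PF hx.ne'))
    omega

theorem inversions_eq_precedingSwaps (h : BubbleInvariant PT PF (PF b) (PF b + 1) σ)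
    (hab : (σ b : ℕ) = σ a + 1) (hb : PF b < σ b) :
    inversions PT σ = precedingSwaps PT PF (a, b) := by
  rw [precedingSwaps, ← Set.inter_eq_right.2 h.inversions_subset]
  ext ⟨x, y⟩
  refine and_congr_right fun hxy => ?_
  obtain ⟨hPT, hPF⟩ : PT x < PT y ∧ PF y < PF x := hxy
  have hσ : (x, y) ∈ inversions PT σ ↔ σ y < σ x := and_iff_right hPT
  rw [hσ, bubbleKey_lt_iff]
  rcases lt_trichotomy (PF y) (PF b) with hy | hy | hy
  · exact iff_of_true (h.apply_lt_apply_of_val_lt hy hPF) (.inl hy)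
  · obtain rfl := PF.injective hy
    simpa using h.apply_lt_apply_iff hab hb hPF
  · refine iff_of_false (lt_asymm (h.apply_lt_apply (hy.trans hPF).le hy hPT)) ?_
    rintro (hlt | ⟨rfl, -⟩)
    exacts [lt_asymm hy hlt, lt_irrefl _ hy]

variable [DecidableEq M]

protected theorem swapUp (h : BubbleInvariant PT PF (PF b) (PF b + 1) σ)
    (hab : (σ b : ℕ) = σ a + 1) (hb : PF b < σ b) :
    BubbleInvariant PT PF (PF b) (PF b + 1) (swapUp σ b) := by
  obtain ⟨hPT, hPF⟩ := h.mem_inversions hab hb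
  refine ⟨fun x hx => ?_, fun x y hx hy hxy => ?_⟩
  · have hxb : x ≠ b := by rintro rfl; exact lt_irrefl _ hx
    have hxa : x ≠ a := by rintro rfl; exact lt_asymm hPF hx
    exact Fin.ext (by rw [swapUp_apply_val hab, if_neg hxb, if_neg hxa, h.apply_eq hx])
  · refine (swapUp_lt_swapUp_iff hab (fun heq => ?_) fun heq => ?_).2 (h.apply_lt_apply hx hy hxy)
    · obtain ⟨rfl, rfl⟩ := Prod.ext_iff.1 heq
      exact Nat.not_succ_le_self _ hy
    · obtain ⟨rfl, rfl⟩ := Prod.ext_iff.1 heq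
      exact lt_asymm hPT hxy

theorem bubbleStep (h : BubbleInvariant PT PF (PF b) (PF b + 1) σ)
    (hab : (σ b : ℕ) = σ a + 1) (hb : PF b < σ b) :
    BubbleStep PT PF σ (swapUp σ b) := by
  have hmem := h.mem_inversions hab hb
  refine ⟨(a, b), hmem, h.inversions_eq_precedingSwaps hab hb, ?_⟩
  rw [inversions_swapUp hab hmem.1, h.inversions_eq_precedingSwaps hab hb]

theorem isChain_moveUp_and_next_phase {k : ℕ} (h : BubbleInvariant PT PF (PF b) (PF b + 1) σ)
    (hk : (σ b : ℕ) = PF b + k) :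
    (σ :: moveUp b σ k).IsChain (BubbleStep PT PF) ∧
      BubbleInvariant PT PF (PF b + 1) (PF b + 1) ((moveUp b σ k).getLast?.getD σ) := by
  induction k generalizing σ with
  | zero => exact ⟨List.isChain_singleton _, h.next_phase (Fin.ext hk)⟩
  | succ k ih =>
    obtain ⟨a, ha⟩ := σ.surjective ⟨PF b + k, by omega⟩
    have hab : (σ b : ℕ) = σ a + 1 := by rw [ha, hk, add_assoc]
    have hb : PF b < σ b := by rw [Fin.lt_def]; omega
    have hb' : (swapUp σ b b : ℕ) = PF b + k := by
      rw [swapUp_apply_val hab, if_pos rfl, ha]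
    obtain ⟨hchain, hlast⟩ := ih (h.swapUp hab hb) hb'
    refine ⟨hchain.cons_cons (h.bubbleStep hab hb), ?_⟩
    rwa [moveUp, List.getLast?_cons, Option.getD_some]

theorem isChain_canonFrom_and_getLast (h : BubbleInvariant PT PF t t σ) (ht : t ≤ m) :
    (σ :: canonFrom PF σ ((List.finRange m).drop t)).IsChain (BubbleStep PT PF) ∧
      (canonFrom PF σ ((List.finRange m).drop t)).getLast?.getD σ = PF := by
  induction ht using Nat.decreasingInduction generalizing σ with
  | self =>
    rw [List.drop_eq_nil_of_le (by simp)]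
    exact ⟨List.isChain_singleton _, Equiv.ext fun x => h.apply_eq (PF x).isLt⟩
  | of_succ t ht ih =>
    obtain ⟨b, hb⟩ := PF.surjective ⟨t, ht⟩
    obtain rfl : (PF b : ℕ) = t := by rw [hb]
    have hle : (PF b : ℕ) ≤ σ b := not_lt.1 (h.apply_val_lt_iff.not.2 (lt_irrefl _))
    obtain ⟨hchain, hinv⟩ := h.mid_phase.isChain_moveUp_and_next_phase (Nat.add_sub_of_le hle).symm
    obtain ⟨hchain', hlast⟩ := ih hinv
    rw [List.drop_eq_getElem_cons (by rwa [List.length_finRange])]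
    simp only [canonFrom, List.getElem_finRange, Fin.cast_mk, Fin.eta, Equiv.symm_apply_apply]
    exact ⟨isChain_cons_append hchain hchain', by rwa [getLast?_getD_append]⟩

end BubbleInvariant

section CanonicalTransition

variable {M : Type*} [DecidableEq M] {m : ℕ}

theorem isChain_canonicalTransition (PT PF : M ≃ Fin m) :
    (canonicalTransition PT PF).IsChain (BubbleStep PT PF) :=
  ((bubbleInvariant_zero PT PF).isChain_canonFrom_and_getLast m.zero_le).1

theorem canonFrom_finRange_getLast?_getD (PT PF : M ≃ Fin m) :
    (canonFrom PF PT (List.finRange m)).getLast?.getD PT = PF :=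
  ((bubbleInvariant_zero PT PF).isChain_canonFrom_and_getLast m.zero_le).2

theorem pairwise_inversions_ssubset_canonicalTransition (PT PF : M ≃ Fin m) :
    (canonicalTransition PT PF).Pairwise fun P P' => inversions PT P ⊂ inversions PT P' := by
  have hchain := (isChain_canonicalTransition PT PF).imp
    fun _ _ => BubbleStep.inversions_ssubset
  have : IsTrans (M ≃ Fin m) fun P P' => inversions PT P ⊂ inversions PT P' :=
    ⟨fun _ _ _ => ssubset_trans⟩
  exact hchain.pairwise

theorem exists_mem_canonicalTransition {PT PF : M ≃ Fin m} {q : M × M}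
    (hq : q ∈ inversions PT PF) :
    ∃ P ∈ canonicalTransition PT PF, inversions PT P = precedingSwaps PT PF q := by
  have hchain := isChain_canonicalTransition PT PF
  have hlast := canonFrom_finRange_getLast?_getD PT PF
  obtain ⟨P, hmem, P', ⟨r, -, hP, hP'⟩, hqP, hqP'⟩ :=
    exists_mem_rel_not_of_isChain (φ := fun P => q ∈ inversions PT P) hchain
      (by simp [inversions_self]) (by rwa [hlast])
  obtain rfl : q = r := by
    rw [hP', ← hP] at hqP'
    exact hqP'.resolve_right hqP
  exact ⟨P, hmem, hP⟩

theorem mem_canonicalTransition_iff {PT PF P : M ≃ Fin m} :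
    P ∈ canonicalTransition PT PF ↔
      P = PF ∨ ∃ q ∈ inversions PT PF, inversions PT P = precedingSwaps PT PF q := by
  have hchain := isChain_canonicalTransition PT PF
  have hlast := canonFrom_finRange_getLast?_getD PT PF
  constructor
  · intro hP
    rcases eq_getLast_or_exists_rel_of_mem_isChain hchain hP with hP | ⟨P', q, hq, hPq, -⟩
    exacts [.inl (hP.trans hlast), .inr ⟨q, hq, hPq⟩]
  · rintro (rfl | ⟨q, hq, hPq⟩)
    · exact List.mem_of_getLast? (by rw [canonicalTransition, List.getLast?_cons, hlast])
    · obtain ⟨Q, hQ, hQq⟩ := exists_mem_canonicalTransition hq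
      rwa [inversions_right_injective PT (hPq.trans hQq.symm)]

end CanonicalTransition

section Segment

variable {M : Type*} {u v : M → ℝ} {α : ℝ} {a b : M}

theorem transTime_lt_iff (hu : u b < u a) (hv : v a < v b) :
    transTime u v a b < α ↔ mix u v α a < mix u v α b := by
  have hpos : 0 < u a - u b + v b - v a := by linarith
  rw [transTime, div_lt_iff₀ hpos, mix, mix]
  constructor <;> intro h <;> linarith

theorem lt_transTime_iff (hu : u b < u a) (hv : v a < v b) :
    α < transTime u v a b ↔ mix u v α b < mix u v α a := by
  have hpos : 0 < u a - u b + v b - v a := by linarith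
  rw [transTime, lt_div_iff₀ hpos, mix, mix]
  constructor <;> intro h <;> linarith

theorem transTime_pos (hu : u b < u a) (hv : v a < v b) : 0 < transTime u v a b :=
  (lt_transTime_iff hu hv).2 (by simpa [mix] using hu)

theorem transTime_lt_one (hu : u b < u a) (hv : v a < v b) : transTime u v a b < 1 :=
  (transTime_lt_iff hu hv).2 (by simpa [mix] using hv)

theorem mix_lt_mix (hα : α ∈ Set.Icc (0 : ℝ) 1) (hu : u b < u a) (hv : v b < v a) :
    mix u v α b < mix u v α a := by
  have hpos : (1 - α) • (u a - u b) + α • (v a - v b) ∈ Set.Ioi (0 : ℝ) :=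
    convex_Ioi 0 (sub_pos.2 hu) (sub_pos.2 hv) (sub_nonneg.2 hα.2) hα.1 (sub_add_cancel 1 α)
  rw [Set.mem_Ioi, smul_eq_mul, smul_eq_mul] at hpos
  rw [mix, mix]
  linarith

variable {m : ℕ} {PT PF P : M ≃ Fin m}

theorem inversions_eq_of_consistent_mix (huc : Consistent u PT) (hvc : Consistent v PF)
    (hα : α ∈ Set.Icc (0 : ℝ) 1) (hP : Consistent (mix u v α) P) :
    inversions PT P = {p ∈ inversions PT PF | transTime u v p.1 p.2 < α} := by
  ext ⟨a, b⟩
  constructor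
  · rintro ⟨hPT, hPba⟩
    have hlt := hP _ _ hPba
    have hPF : PF b < PF a := by
      refine (PF.injective.ne (ne_of_apply_ne PT hPT.ne)).lt_or_gt.resolve_left fun hPF => ?_
      exact lt_asymm hlt (mix_lt_mix hα (huc _ _ hPT) (hvc _ _ hPF))
    exact ⟨⟨hPT, hPF⟩, (transTime_lt_iff (huc _ _ hPT) (hvc _ _ hPF)).2 hlt⟩
  · rintro ⟨⟨hPT, hPF⟩, htime⟩
    refine ⟨hPT, (P.injective.ne (ne_of_apply_ne PT hPT.ne)).lt_or_gt.resolve_left fun hPab => ?_⟩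
    exact lt_asymm (hP _ _ hPab) ((transTime_lt_iff (huc _ _ hPT) (hvc _ _ hPF)).1 htime)

theorem consistent_mix_of_inversions_eq (huc : Consistent u PT) (hvc : Consistent v PF)
    (hα : α ∈ Set.Icc (0 : ℝ) 1) (hne : ∀ p ∈ inversions PT PF, transTime u v p.1 p.2 ≠ α)
    (hP : inversions PT P = {p ∈ inversions PT PF | transTime u v p.1 p.2 < α}) :
    Consistent (mix u v α) P := by
  intro a b hab
  have hab_ne : a ≠ b := ne_of_apply_ne P hab.ne
  rcases (PT.injective.ne hab_ne).lt_or_gt with hPT | hPT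
  · rcases (PF.injective.ne hab_ne).lt_or_gt with hPF | hPF
    · exact mix_lt_mix hα (huc _ _ hPT) (hvc _ _ hPF)
    · have hmem : (a, b) ∈ inversions PT PF := ⟨hPT, hPF⟩
      have hnotMem : (a, b) ∉ inversions PT P := fun h => lt_asymm hab h.2
      have hle : α ≤ transTime u v a b := not_lt.1 fun h => hnotMem (hP ▸ ⟨hmem, h⟩)
      exact (lt_transTime_iff (huc _ _ hPT) (hvc _ _ hPF)).1 (hle.lt_of_ne' (hne _ hmem))
  · obtain ⟨⟨-, hPF⟩, htime⟩ := hP.subset (show (b, a) ∈ inversions PT P from ⟨hPT, hab⟩)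
    exact (transTime_lt_iff (huc _ _ hPT) (hvc _ _ hPF)).1 htime

end Segment

section Characterization

variable {M : Type*} {m : ℕ} {PT PF : M ≃ Fin m} {u v : M → ℝ}

/-- The transition times of the pairs swapped between `PT` and `PF` increase strictly along the
bubble sort from `PT` to `PF`. -/
def BubbleOrderedTimes (u v : M → ℝ) (PT PF : M ≃ Fin m) : Prop :=
  ∀ p ∈ inversions PT PF, ∀ q ∈ inversions PT PF, bubbleKey PT PF p < bubbleKey PT PF q →
    transTime u v p.1 p.2 < transTime u v q.1 q.2

theorem bubbleOrderedTimes_iff :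
    BubbleOrderedTimes u v PT PF ↔
      ∀ a b c d : M, PT a < PT b → PT c < PT d → PF b < PF a → PF d < PF c →
        ((PF b < PF d → transTime u v a b < transTime u v c d) ∧
         (b = d → PT c < PT a → transTime u v a b < transTime u v c d)) := by
  simp only [BubbleOrderedTimes, bubbleKey_lt_iff, Prod.forall, inversions, Set.mem_ofPred_eq]
  grind

theorem BubbleOrderedTimes.exists_between (htimes : BubbleOrderedTimes u v PT PF)
    (huc : Consistent u PT) (hvc : Consistent v PF) {q : M × M} (hq : q ∈ inversions PT PF) :
    ∃ α ∈ Set.Icc (0 : ℝ) 1, α < transTime u v q.1 q.2 ∧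
      ∀ p ∈ precedingSwaps PT PF q, transTime u v p.1 p.2 < α := by
  have : Finite M := Finite.of_equiv _ PT.symm
  have hu : u q.2 < u q.1 := huc _ _ hq.1
  have hv : v q.1 < v q.2 := hvc _ _ hq.2
  have hlower : ∀ᶠ α in nhds (transTime u v q.1 q.2),
      0 < α ∧ ∀ p ∈ precedingSwaps PT PF q, transTime u v p.1 p.2 < α :=
    (eventually_gt_nhds (transTime_pos hu hv)).and <|
      (Set.toFinite (precedingSwaps PT PF q)).eventually_all.2 fun p hp =>
        eventually_gt_nhds (htimes p hp.1 q hq hp.2)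
  obtain ⟨α, hαq, hα0, hpre⟩ := hlower.exists_lt
  exact ⟨α, ⟨hα0.le, (hαq.trans (transTime_lt_one hu hv)).le⟩, hαq, hpre⟩

theorem BubbleOrderedTimes.transTime_le (htimes : BubbleOrderedTimes u v PT PF) {p q : M × M}
    (hp : p ∈ inversions PT PF) (hq : q ∈ inversions PT PF) (hpq : p ∉ precedingSwaps PT PF q) :
    transTime u v q.1 q.2 ≤ transTime u v p.1 p.2 := by
  rcases (not_lt.1 fun h => hpq ⟨hp, h⟩).eq_or_lt with hkey | hkey
  · rw [bubbleKey_injective PT PF hkey]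
  · exact (htimes q hq p hp hkey).le

theorem BubbleOrderedTimes.exists_consistent_mix (htimes : BubbleOrderedTimes u v PT PF)
    (huc : Consistent u PT) (hvc : Consistent v PF) {P : M ≃ Fin m} {q : M × M}
    (hq : q ∈ inversions PT PF) (hP : inversions PT P = precedingSwaps PT PF q) :
    ∃ α ∈ Set.Icc (0 : ℝ) 1, Consistent (mix u v α) P := by
  obtain ⟨α, hα, hαq, hpre⟩ := htimes.exists_between huc hvc hq
  have hpost : ∀ p ∈ inversions PT PF, p ∉ precedingSwaps PT PF q → α < transTime u v p.1 p.2 :=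
    fun p hp hpq => hαq.trans_le (htimes.transTime_le hp hq hpq)
  refine ⟨α, hα, consistent_mix_of_inversions_eq huc hvc hα (fun p hp => ?_) ?_⟩
  · by_cases hpq : p ∈ precedingSwaps PT PF q
    exacts [(hpre p hpq).ne, (hpost p hp hpq).ne']
  · rw [hP]
    refine Set.Subset.antisymm (fun p hpq => ⟨hpq.1, hpre p hpq⟩) fun p hp => ?_
    by_contra hpq
    exact lt_asymm hp.2 (hpost p hp.1 hpq)

theorem BubbleOrderedTimes.mem_canonicalTransition [DecidableEq M]
    (htimes : BubbleOrderedTimes u v PT PF)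
    (huc : Consistent u PT) (hvc : Consistent v PF) {P : M ≃ Fin m} {α : ℝ}
    (hα : α ∈ Set.Icc (0 : ℝ) 1) (hP : Consistent (mix u v α) P) :
    P ∈ canonicalTransition PT PF := by
  have hinv := inversions_eq_of_consistent_mix huc hvc hα hP
  rw [mem_canonicalTransition_iff]
  by_cases hall : inversions PT P = inversions PT PF
  · exact .inl (inversions_right_injective PT hall)
  · have hsub : inversions PT P ⊆ inversions PT PF := hinv ▸ Set.sep_subset _ _
    refine .inr (exists_eq_precedingSwaps (hsub.ssubset_of_ne hall) fun p hp q hq hpq => ?_)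
    have hq' := hinv.subset hq
    exact hinv.superset ⟨hp, (htimes p hp q hq'.1 hpq).trans hq'.2⟩

theorem lt_of_inversions_ssubset (huc : Consistent u PT) (hvc : Consistent v PF)
    {P P' : M ≃ Fin m} {α α' : ℝ} (hα : α ∈ Set.Icc (0 : ℝ) 1) (hα' : α' ∈ Set.Icc (0 : ℝ) 1)
    (hP : Consistent (mix u v α) P) (hP' : Consistent (mix u v α') P')
    (h : inversions PT P ⊂ inversions PT P') : α < α' := by
  rw [inversions_eq_of_consistent_mix huc hvc hα hP,
    inversions_eq_of_consistent_mix huc hvc hα' hP'] at h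
  exact not_le.1 fun hle => h.2 fun p hp => ⟨hp.1, hp.2.trans_le hle⟩

variable [DecidableEq M]

theorem BubbleOrderedTimes.canonicalPassing (htimes : BubbleOrderedTimes u v PT PF)
    (huc : Consistent u PT) (hvc : Consistent v PF) : CanonicalPassing u v PT PF := by
  refine ⟨fun P => ⟨fun ⟨α, hα, hP⟩ => htimes.mem_canonicalTransition huc hvc hα hP, ?_⟩,
    fun k l hk hl hkl α α' hα hα' hP hP' => ?_⟩
  · intro hP
    rcases mem_canonicalTransition_iff.1 hP with rfl | ⟨q, hq, hPq⟩
    · exact ⟨1, Set.right_mem_Icc.2 zero_le_one, by simpa [Consistent, mix] using hvc⟩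
    · exact htimes.exists_consistent_mix huc hvc hq hPq
  · exact lt_of_inversions_ssubset huc hvc hα hα' hP hP' (List.pairwise_iff_getElem.1
      (pairwise_inversions_ssubset_canonicalTransition PT PF) k l hk hl hkl)

theorem CanonicalPassing.bubbleOrderedTimes (hpass : CanonicalPassing u v PT PF)
    (huc : Consistent u PT) (hvc : Consistent v PF) : BubbleOrderedTimes u v PT PF := by
  intro p hp q hq hpq
  obtain ⟨P, hP, hPq⟩ := exists_mem_canonicalTransition hq
  obtain ⟨α, hα, hcons⟩ := (hpass.1 P).2 hP
  have hinv := inversions_eq_of_consistent_mix huc hvc hα hcons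
  have hpα : transTime u v p.1 p.2 < α := (hinv.subset (hPq.superset ⟨hp, hpq⟩)).2
  have hqα : α ≤ transTime u v q.1 q.2 := not_lt.1 fun h =>
    notMem_precedingSwaps_self PT PF q (hPq.subset (hinv.superset ⟨hq, h⟩))
  exact hpα.trans_le hqα

end Characterization

theorem canonical_transition_iff_transition_times_general
    {M : Type*} [DecidableEq M] {m : ℕ} (PT PF : M ≃ Fin m) (u v : M → ℝ)
    (huc : Consistent u PT) (hvc : Consistent v PF) :
    CanonicalPassing u v PT PF ↔
      (∀ a b c d : M, PT a < PT b → PT c < PT d → PF b < PF a → PF d < PF c →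
        ((PF b < PF d → transTime u v a b < transTime u v c d) ∧
         (b = d → PT c < PT a → transTime u v a b < transTime u v c d))) :=
  Iff.trans ⟨fun hpass => hpass.bubbleOrderedTimes huc hvc,
    fun htimes => htimes.canonicalPassing huc hvc⟩ bubbleOrderedTimes_iff

/-- **Claim 5 (Characterization of the canonical transition via transition times).**
Suppose `u` is consistent with `P^T`, `v` is consistent with `P^F`, `co(u,v)` makes
no simultaneous transitions, and the indifference parameters of distinct swapped pairs
are distinct. Then `co(u,v)` passes exactly the canonical (bubble-sort) transition from
`P^T` to `P^F` (in increasing order of `α`) iff for all objects `a,b,c,d` with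
`P^T : a ≻ b`, `P^T : c ≻ d`, `P^F : b ≻ a`, `P^F : d ≻ c`:
(i) if `P^F : b ≻ d` then `α(a,b,1) < α(c,d,1)`, and
(ii) if `b = d` and `P^T : c ≻ a` then `α(a,b,1) < α(c,d,1)`. -/
theorem canonical_transition_iff_transition_times
    {M : Type*} [Fintype M] [DecidableEq M] {m : ℕ}
    (PT PF : M ≃ Fin m) (u v : M → ℝ)
    (hu0 : ∀ j, 0 ≤ u j) (hv0 : ∀ j, 0 ≤ v j)
    (huc : Consistent u PT) (hvc : Consistent v PF)
    (hnosim : ∀ α ∈ Set.Icc (0 : ℝ) 1, ∀ a b c : M, a ≠ b → a ≠ c → b ≠ c →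
      ¬(mix u v α a = mix u v α b ∧ mix u v α b = mix u v α c))
    (hdist : ∀ a b c d : M, u b < u a → v a < v b → u d < u c → v c < v d →
      (a, b) ≠ (c, d) → transTime u v a b ≠ transTime u v c d) :
    CanonicalPassing u v PT PF ↔
      (∀ a b c d : M, PT a < PT b → PT c < PT d → PF b < PF a → PF d < PF c →
        ((PF b < PF d → transTime u v a b < transTime u v c d) ∧
         (b = d → PT c < PT a → transTime u v a b < transTime u v c d))) := by
  exact canonical_transition_iff_transition_times_general PT PF u v huc hvc
end

section
/- Let s > 1 and α ∈ ℝ, and define β = s·α, γ_c = (1−α)/((s−1)·(s·(s+1)−1)), and γ_d = s·(s+1)·(1−α)/(s·(s+1)−1). Then all six vectors (α,0,0,1−α), (0,β,0,1−β), (0,0,0,1), (0,0,γ_c,1−γ_c), (1−γ_c−γ_d,0,γ_c,γ_d), and (1−γ_c−γ_d,γ_d,γ_c,0) have all entries in [0,1] (equivalently, they are probability vectors over four objects) if and only if α ∈ [s/(s³−s+1), 1/s]; moreover s/(s³−s+1) < 1/s for all s > 1, so this interval is nonempty. -/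
/-!
Each vector sums to `1`, so its entries lie in `[0, 1]` as soon as they are nonnegative. Two of the
resulting constraints decide everything. The first is `β ≤ 1`, that is `α ≤ 1 / s`. For the second,
put `q = (s - 1) (s (s + 1) - 1)`; then `s³ - s + 1 = q + s` and `γc + γd = (1 - α) (q + s) / q`, so
that `γc + γd ≤ 1` amounts to `s / (q + s) ≤ α`. These two bounds put `α` in `[0, 1]`, and the
remaining constraints follow.
-/

open Set

section OrderedSemiring

variable {R : Type*} [Semiring R] [PartialOrder R] [IsOrderedRing R]

theorem forall_mem_Icc_zero_one_iff_nonneg {ι : Type*} [Fintype ι] {v : ι → R}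
    (hv : ∑ i, v i = 1) : (∀ i, v i ∈ Icc (0 : R) 1) ↔ ∀ i, 0 ≤ v i :=
  ⟨fun h i ↦ (h i).1, fun h ↦ mem_Icc_of_mem_stdSimplex ⟨h, hv⟩⟩

theorem forall_vecCons_four_mem_Icc_iff_nonneg {w x y z : R} (hsum : w + x + y + z = 1) :
    (∀ i, ![w, x, y, z] i ∈ Icc (0 : R) 1) ↔ 0 ≤ w ∧ 0 ≤ x ∧ 0 ≤ y ∧ 0 ≤ z := by
  rw [forall_mem_Icc_zero_one_iff_nonneg (by simpa [Fin.sum_univ_four] using hsum)]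
  simp [Fin.forall_fin_succ]

end OrderedSemiring

theorem assignment_vectors_mem_Icc_iff {R : Type*} [Ring R] [PartialOrder R] [IsOrderedRing R]
    (a b c d : R) :
    ((∀ i, ![a, 0, 0, 1 - a] i ∈ Icc (0 : R) 1) ∧
      (∀ i, ![0, b, 0, 1 - b] i ∈ Icc (0 : R) 1) ∧
      (∀ i, ![0, 0, 0, 1] i ∈ Icc (0 : R) 1) ∧
      (∀ i, ![0, 0, c, 1 - c] i ∈ Icc (0 : R) 1) ∧
      (∀ i, ![1 - c - d, 0, c, d] i ∈ Icc (0 : R) 1) ∧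
      (∀ i, ![1 - c - d, d, c, 0] i ∈ Icc (0 : R) 1)) ↔
      a ∈ Icc 0 1 ∧ b ∈ Icc 0 1 ∧ 0 ≤ c ∧ 0 ≤ d ∧ c + d ≤ 1 := by
  have c_le_one (hd : 0 ≤ d) (hcd : c + d ≤ 1) : c ≤ 1 := (le_add_of_nonneg_right hd).trans hcd
  repeat rw [forall_vecCons_four_mem_Icc_iff_nonneg (by abel)]
  simp only [sub_sub, sub_nonneg, mem_Icc, le_refl, zero_le_one, true_and, and_true]
  tauto

theorem cube_sub_add_one_eq {R : Type*} [CommRing R] (s : R) :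
    s ^ 3 - s + 1 = (s - 1) * (s * (s + 1) - 1) + s := by
  ring

section StrictOrderedCommRing

variable {R : Type*} [CommRing R] [PartialOrder R] [IsStrictOrderedRing R] {s : R}

theorem mul_add_one_sub_one_pos (hs : 1 < s) : 0 < s * (s + 1) - 1 := by
  have s_pos : 0 < s := one_pos.trans hs
  exact sub_pos.2 (hs.trans (lt_mul_of_one_lt_right s_pos (lt_add_of_pos_left 1 s_pos)))

theorem sub_one_mul_mul_add_one_sub_one_pos (hs : 1 < s) : 0 < (s - 1) * (s * (s + 1) - 1) :=
  mul_pos (sub_pos.2 hs) (mul_add_one_sub_one_pos hs)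

theorem cube_sub_add_one_pos (hs : 1 < s) : 0 < s ^ 3 - s + 1 := by
  rw [cube_sub_add_one_eq]
  exact add_pos (sub_one_mul_mul_add_one_sub_one_pos hs) (one_pos.trans hs)

end StrictOrderedCommRing

section OrderedField

variable {K : Type*} [Field K] [LinearOrder K] [IsStrictOrderedRing K]

theorem one_sub_mul_add_div_le_one_iff {q r : K} (hq : 0 < q) (hqr : 0 < q + r) (a : K) :
    (1 - a) * (q + r) / q ≤ 1 ↔ r / (q + r) ≤ a := by
  rw [div_le_one hq, div_le_iff₀ hqr, sub_mul, one_mul, sub_le_comm, add_sub_cancel_left]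

variable {s : K}

theorem div_cube_sub_add_one_lt_one_div (hs : 1 < s) : s / (s ^ 3 - s + 1) < 1 / s := by
  have gap_pos : 0 < (s - 1) ^ 2 * (s + 1) :=
    mul_pos (pow_pos (sub_pos.2 hs) 2) (by linarith)
  rw [div_lt_div_iff₀ (cube_sub_add_one_pos hs) (one_pos.trans hs)]
  linear_combination gap_pos

theorem div_add_mul_div_le_one_iff (hs : 1 < s) (a : K) :
    (1 - a) / ((s - 1) * (s * (s + 1) - 1)) + s * (s + 1) * (1 - a) / (s * (s + 1) - 1) ≤ 1 ↔
      s / (s ^ 3 - s + 1) ≤ a := by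
  have hq := sub_one_mul_mul_add_one_sub_one_pos hs
  have sum_eq : (1 - a) / ((s - 1) * (s * (s + 1) - 1)) +
      s * (s + 1) * (1 - a) / (s * (s + 1) - 1) =
        (1 - a) * ((s - 1) * (s * (s + 1) - 1) + s) / ((s - 1) * (s * (s + 1) - 1)) := by
    have := (sub_pos.2 hs).ne'
    have := (mul_add_one_sub_one_pos hs).ne'
    field_simp
    ring
  rw [sum_eq, cube_sub_add_one_eq]
  exact one_sub_mul_add_div_le_one_iff hq (add_pos hq (one_pos.trans hs)) a

theorem feasibility_iff_general
    (s α β γc γd : K) (hs : 1 < s)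
    (hβ : β = s * α)
    (hγc : γc = (1 - α) / ((s - 1) * (s * (s + 1) - 1)))
    (hγd : γd = s * (s + 1) * (1 - α) / (s * (s + 1) - 1)) :
    (((∀ i, ![α, 0, 0, 1 - α] i ∈ Icc (0 : K) 1) ∧
      (∀ i, ![0, β, 0, 1 - β] i ∈ Icc (0 : K) 1) ∧
      (∀ i, ![0, 0, 0, 1] i ∈ Icc (0 : K) 1) ∧
      (∀ i, ![0, 0, γc, 1 - γc] i ∈ Icc (0 : K) 1) ∧
      (∀ i, ![1 - γc - γd, 0, γc, γd] i ∈ Icc (0 : K) 1) ∧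
      (∀ i, ![1 - γc - γd, γd, γc, 0] i ∈ Icc (0 : K) 1)) ↔
      α ∈ Icc (s / (s ^ 3 - s + 1)) (1 / s)) ∧
    s / (s ^ 3 - s + 1) < 1 / s := by
  have s_pos : 0 < s := one_pos.trans hs
  have β_le_one_iff : β ≤ 1 ↔ α ≤ 1 / s := by rw [hβ, le_div_iff₀' s_pos]
  have sum_le_one_iff : γc + γd ≤ 1 ↔ s / (s ^ 3 - s + 1) ≤ α := by
    rw [hγc, hγd, div_add_mul_div_le_one_iff hs]
  refine ⟨?_, div_cube_sub_add_one_lt_one_div hs⟩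
  rw [assignment_vectors_mem_Icc_iff, mem_Icc (a := s / _), ← β_le_one_iff, ← sum_le_one_iff]
  refine ⟨fun ⟨_, hβ_mem, _, _, hsum⟩ ↦ ⟨hsum, hβ_mem.2⟩, fun ⟨hsum, hβ_le⟩ ↦ ?_⟩
  have α_nonneg : 0 ≤ α :=
    (div_pos s_pos (cube_sub_add_one_pos hs)).le.trans (sum_le_one_iff.1 hsum)
  have α_le_one : α ≤ 1 := (β_le_one_iff.1 hβ_le).trans ((div_le_one s_pos).2 hs.le)
  have β_nonneg : 0 ≤ β := hβ ▸ mul_nonneg s_pos.le α_nonneg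
  have γc_nonneg : 0 ≤ γc :=
    hγc ▸ div_nonneg (sub_nonneg.2 α_le_one) (sub_one_mul_mul_add_one_sub_one_pos hs).le
  have γd_nonneg : 0 ≤ γd :=
    hγd ▸ div_nonneg (mul_nonneg (by positivity) (sub_nonneg.2 α_le_one))
      (mul_add_one_sub_one_pos hs).le
  exact ⟨⟨α_nonneg, α_le_one⟩, ⟨β_nonneg, hβ_le⟩, γc_nonneg, γd_nonneg, hsum⟩

end OrderedField

/-- **Claim 6 (Feasibility of the tightness construction).**
Let `s > 1`, `β = s·α`, `γc = (1-α)/((s-1)(s(s+1)-1))`, and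
`γd = s(s+1)(1-α)/(s(s+1)-1)`. The six assignment vectors of the constructed
mechanism all have entries in `[0,1]` iff `α ∈ [s/(s³-s+1), 1/s]`; moreover
`s/(s³-s+1) < 1/s`, so this interval is nonempty. -/
theorem feasibility_iff
    (s α β γc γd : ℝ) (hs : 1 < s)
    (hβ : β = s * α)
    (hγc : γc = (1 - α) / ((s - 1) * (s * (s + 1) - 1)))
    (hγd : γd = s * (s + 1) * (1 - α) / (s * (s + 1) - 1)) :
    (((∀ i, ![α, 0, 0, 1 - α] i ∈ Set.Icc (0 : ℝ) 1) ∧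
      (∀ i, ![0, β, 0, 1 - β] i ∈ Set.Icc (0 : ℝ) 1) ∧
      (∀ i, ![0, 0, 0, 1] i ∈ Set.Icc (0 : ℝ) 1) ∧
      (∀ i, ![0, 0, γc, 1 - γc] i ∈ Set.Icc (0 : ℝ) 1) ∧
      (∀ i, ![1 - γc - γd, 0, γc, γd] i ∈ Set.Icc (0 : ℝ) 1) ∧
      (∀ i, ![1 - γc - γd, γd, γc, 0] i ∈ Set.Icc (0 : ℝ) 1)) ↔
      α ∈ Set.Icc (s / (s ^ 3 - s + 1)) (1 / s)) ∧
    s / (s ^ 3 - s + 1) < 1 / s :=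
  feasibility_iff_general s α β γc γd hs hβ hγc hγd
end

section
/- Let M be a finite set of m objects, P a preference order on M, and r ∈ (0,1]. Then there exists C₀ > 1 such that for all C ≥ C₀, the utility function v(j) = C^{m − rank_P(j)} is consistent with P and satisfies URBI(r). -/
open Finset

/-!
Objects with different geometric utilities have utilities at least a factor `C` apart, so
`C ≥ r⁻¹` gives `u b ≤ r * u a` whenever `u b < u a`. Subtracting the minimal utility `μ ≥ 0`
from both utilities preserves this bound, because `r * μ ≤ μ`.
-/

theorem pow_le_mul_pow_of_lt {R : Type*} [Semiring R] [PartialOrder R] [IsOrderedRing R]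
    {r C : R} {k n : ℕ} (hr : 0 ≤ r) (hC : 1 ≤ C) (hrC : 1 ≤ r * C) (hkn : k < n) :
    C ^ k ≤ r * C ^ n := by
  have hC0 : 0 ≤ C := zero_le_one.trans hC
  calc
    C ^ k ≤ r * C * C ^ k := le_mul_of_one_le_left (pow_nonneg hC0 k) hrC
    _ = r * C ^ (k + 1) := by rw [mul_assoc, ← pow_succ']
    _ ≤ r * C ^ n := mul_le_mul_of_nonneg_left (pow_le_pow_right₀ hC hkn) hr

theorem consistent_pow {M : Type*} {m : ℕ} {P : M ≃ Fin m} {C : ℝ} {n : M → ℕ} (hC : 1 < C)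
    (hn : ∀ a b, P a < P b → n b < n a) : Consistent (fun j => C ^ n j) P :=
  fun a b hab => pow_lt_pow_right₀ hC (hn a b hab)

section URBI

variable {M : Type*} [Fintype M] [Nonempty M] {u : M → ℝ} {r C : ℝ}

theorem minU_nonneg (hu : ∀ j, 0 ≤ u j) : 0 ≤ minU u :=
  Finset.le_inf' _ _ fun j _ => hu j

theorem urbi_of_le_mul (hr : r ≤ 1) (hu : ∀ j, 0 ≤ u j)
    (h : ∀ a b, u b < u a → u b ≤ r * u a) : URBI u r := by
  intro a b hab
  have hmin : r * minU u ≤ minU u := mul_le_of_le_one_left (minU_nonneg hu) hr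
  calc
    u b - minU u ≤ r * u a - r * minU u := sub_le_sub (h a b hab) hmin
    _ = r * (u a - minU u) := (mul_sub r _ _).symm

theorem urbi_pow (hr : r ∈ Set.Ioc 0 1) (hC : r⁻¹ ≤ C) (n : M → ℕ) :
    URBI (fun j => C ^ n j) r := by
  have hC1 : 1 ≤ C := ((one_le_inv₀ hr.1).2 hr.2).trans hC
  have hrC : 1 ≤ r * C := (inv_le_iff_one_le_mul₀' hr.1).1 hC
  refine urbi_of_le_mul hr.2 (fun j => pow_nonneg (zero_le_one.trans hC1) (n j)) fun a b hab => ?_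
  have hlt : n b < n a := (pow_right_mono₀ hC1).reflect_lt hab
  exact pow_le_mul_pow_of_lt hr.1.le hC1 hrC hlt

end URBI

/-- **The geometric utility function is consistent and satisfies URBI(r).**
For a preference order `P` on `m` objects and `r ∈ (0,1]`, there exists `C₀ > 1` such
that for all `C ≥ C₀`, the utility function `v(j) = C^(m - rank_P(j))` is consistent
with `P` and satisfies `URBI(r)`. (Here `rank_P(j) = (P j : ℕ) + 1`.) -/
theorem geometric_utility_urbi
    {M : Type*} [Fintype M] [DecidableEq M] [Nonempty M] {m : ℕ}
    (hm : Fintype.card M = m) (P : M ≃ Fin m)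
    (r : ℝ) (hr : r ∈ Set.Ioc (0 : ℝ) 1) :
    ∃ C₀ : ℝ, 1 < C₀ ∧ ∀ C : ℝ, C₀ ≤ C →
      Consistent (fun j => C ^ (m - 1 - (P j : ℕ))) P ∧
      URBI (fun j => C ^ (m - 1 - (P j : ℕ))) r := by
  have hinv : 1 ≤ r⁻¹ := (one_le_inv₀ hr.1).2 hr.2
  refine ⟨r⁻¹ + 1, by linarith, fun C hC => ⟨?_, urbi_pow hr (by linarith) _⟩⟩
  exact consistent_pow (by linarith) fun a b hab => by omega
end

section
/- For every ε ∈ (0,2) there exists s₀ > 1 such that for all s ≥ s₀ and all α ∈ [0,1), defining γ_c = (1−α)/((s−1)·(s·(s+1)−1)), γ_d = s·(s+1)·(1−α)/(s·(s+1)−1), and s̃ = s^{2−ε}, we have the identity s̃²·(α − 1 + γ_c + γ_d) − s̃·γ_d − γ_c = (1−α)·(−s^{5−ε} + s^{5−2ε} + s^{3−ε} − 1)/(s³ − 2s + 1), and this quantity is strictly negative. Consequently, the constructed mechanism from the tightness proof fails the r^{2−ε}-partial dominance condition (the third adjusted partial sum δ₃ is negative) for the truthful report a≻b≻c≻d against the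 non-local misreport c≻a≻b≻d. -/
/-- The mechanism from the tightness construction, on objects `a = 0`, `b = 1`,
`c = 2`, `d = 3` (with `s = 1/r`), parametrized by `s` and `α`. -/
noncomputable def tightMech (s α : ℝ) (P : Fin 4 ≃ Fin 4) : Fin 4 → ℝ :=
  let β := s * α
  let γc := (1 - α) / ((s - 1) * (s * (s + 1) - 1))
  let γd := s * (s + 1) * (1 - α) / (s * (s + 1) - 1)
  if P 0 = 0 then ![α, 0, 0, 1 - α]                 -- a ≻ …
  else if P 1 = 0 then ![0, β, 0, 1 - β]            -- b ≻ …
  else if P 3 = 0 then ![0, 0, 0, 1]                -- d ≻ …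
  else if P 3 = 1 then ![0, 0, γc, 1 - γc]          -- c ≻ d ≻ …
  else if P 1 = 1 ∨ (P 0 = 1 ∧ P 1 = 2) then        -- c ≻ b ≻ … or c ≻ a ≻ b ≻ d
    ![1 - γc - γd, γd, γc, 0]
  else ![1 - γc - γd, 0, γc, γd]                    -- c ≻ a ≻ d ≻ b

/-- The misreport `c ≻ a ≻ b ≻ d` as a ranking of the objects `a = 0`, `b = 1`,
`c = 2`, `d = 3`. -/
def cabd : Fin 4 ≃ Fin 4 := (Equiv.swap (0 : Fin 4) 2).trans (Equiv.swap (1 : Fin 4) 2)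

/-!
With `t = s ^ (2 - ε)`, the third adjusted partial sum equals
`(1 - α) * (t * s * (t + 1 - s ^ 2) - 1) / (s ^ 3 - 2 * s + 1)`.
Since `2 - ε < 2`, the term `s ^ 2` eventually dominates `t + 1`, so the sum is negative for
large `s`.
-/

open Filter

/-- The probability `γ_c` with which `tightMech` assigns `c` after a report ranking `c` first. -/
noncomputable def gammaC (s α : ℝ) : ℝ := (1 - α) / ((s - 1) * (s * (s + 1) - 1))

/-- The probability `γ_d` of the tightness construction. After the report `c ≻ a ≻ b ≻ d` it is
carried by `b`, not `d`. -/
noncomputable def gammaD (s α : ℝ) : ℝ := s * (s + 1) * (1 - α) / (s * (s + 1) - 1)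

/-- The third adjusted partial sum `δ₃` of `tightMech s α` with discount parameter `t = 1 / r̃`, for
the truthful report `a ≻ b ≻ c ≻ d` (encoded as `Equiv.refl`) against the misreport
`c ≻ a ≻ b ≻ d`. -/
noncomputable def tightDelta (s α t : ℝ) : ℝ :=
  t ^ 2 * (tightMech s α (Equiv.refl (Fin 4)) 0 - tightMech s α cabd 0)
    + t * (tightMech s α (Equiv.refl (Fin 4)) 1 - tightMech s α cabd 1)
    + (tightMech s α (Equiv.refl (Fin 4)) 2 - tightMech s α cabd 2)

theorem tightMech_refl (s α : ℝ) :
    tightMech s α (Equiv.refl (Fin 4)) = ![α, 0, 0, 1 - α] := by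
  simp [tightMech]

theorem tightMech_cabd (s α : ℝ) :
    tightMech s α cabd = ![1 - gammaC s α - gammaD s α, gammaD s α, gammaC s α, 0] := by
  have rank_a : cabd 0 = 1 := by decide
  have rank_b : cabd 1 = 2 := by decide
  have rank_d : cabd 3 = 3 := by decide
  simp [tightMech, gammaC, gammaD, rank_a, rank_b, rank_d]

theorem tightDelta_eq (s α t : ℝ) :
    tightDelta s α t =
      t ^ 2 * (α - 1 + gammaC s α + gammaD s α) - t * gammaD s α - gammaC s α := by
  simp only [tightDelta, tightMech_refl, tightMech_cabd, Matrix.cons_val]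
  ring

theorem cube_sub_two_mul_add_one_eq_mul {R : Type*} [CommRing R] (s : R) :
    s ^ 3 - 2 * s + 1 = (s - 1) * (s * (s + 1) - 1) := by
  ring

theorem cube_sub_two_mul_add_one_pos {R : Type*} [CommRing R] [LinearOrder R]
    [IsStrictOrderedRing R] {s : R} (hs : 1 < s) : 0 < s ^ 3 - 2 * s + 1 := by
  rw [cube_sub_two_mul_add_one_eq_mul]
  exact mul_pos (sub_pos.mpr hs) (by nlinarith)

theorem tightDelta_eq_div {s : ℝ} (hs : s ^ 3 - 2 * s + 1 ≠ 0) (α t : ℝ) :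
    tightDelta s α t = (1 - α) * (t * s * (t + 1 - s ^ 2) - 1) / (s ^ 3 - 2 * s + 1) := by
  have gammaC_eq : gammaC s α = (1 - α) / (s ^ 3 - 2 * s + 1) := by
    rw [gammaC, cube_sub_two_mul_add_one_eq_mul]
  have gammaD_eq : gammaD s α = (1 - α) * (s ^ 3 - s) / (s ^ 3 - 2 * s + 1) := by
    rw [cube_sub_two_mul_add_one_eq_mul] at hs ⊢
    rw [gammaD, ← mul_div_mul_left _ _ (left_ne_zero_of_mul hs)]
    ring
  have gap_at_a : α - 1 + gammaC s α + gammaD s α = (1 - α) * s / (s ^ 3 - 2 * s + 1) := by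
    rw [gammaC_eq, gammaD_eq, eq_div_iff hs, add_mul, add_mul, div_mul_cancel₀ _ hs,
      div_mul_cancel₀ _ hs]
    ring
  rw [tightDelta_eq, gap_at_a, gammaC_eq, gammaD_eq]
  ring

theorem tightDelta_neg {s α t : ℝ} (hs : 1 < s) (hα : α < 1) (ht : 0 ≤ t)
    (hts : t + 1 ≤ s ^ 2) : tightDelta s α t < 0 := by
  have denom_pos := cube_sub_two_mul_add_one_pos hs
  have leading_nonpos : t * s * (t + 1 - s ^ 2) ≤ 0 :=
    mul_nonpos_of_nonneg_of_nonpos (by positivity) (sub_nonpos.mpr hts)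
  rw [tightDelta_eq_div denom_pos.ne']
  exact div_neg_of_neg_of_pos (mul_neg_of_pos_of_neg (by linarith) (by linarith)) denom_pos

theorem rpow_two_sub_mul_eq {s : ℝ} (hs : 0 < s) (ε : ℝ) :
    s ^ (2 - ε) * s * (s ^ (2 - ε) + 1 - s ^ 2) =
      -(s ^ (5 - ε)) + s ^ (5 - 2 * ε) + s ^ (3 - ε) := by
  have rpow_five_sub : s ^ (5 - ε) = s ^ (2 - ε) * s ^ 3 := by
    rw [← Real.rpow_add_natCast hs.ne']
    congr 1; push_cast; ring
  have rpow_five_sub_two_mul : s ^ (5 - 2 * ε) = s ^ (2 - ε) * s ^ (2 - ε) * s := by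
    rw [← Real.rpow_add hs, ← Real.rpow_add_one hs.ne']
    congr 1; ring
  have rpow_three_sub : s ^ (3 - ε) = s ^ (2 - ε) * s := by
    rw [← Real.rpow_add_one hs.ne']
    congr 1; ring
  rw [rpow_five_sub, rpow_five_sub_two_mul, rpow_three_sub]
  ring

theorem eventually_rpow_add_one_le_rpow {p q : ℝ} (hpq : p < q) (hq : 0 < q) :
    ∀ᶠ s : ℝ in atTop, s ^ p + 1 ≤ s ^ q := by
  have ratio_tendsto : Tendsto (fun s : ℝ => s ^ (-(q - p)) + s ^ (-q)) atTop (nhds 0) := by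
    simpa using (tendsto_rpow_neg_atTop (sub_pos.mpr hpq)).add (tendsto_rpow_neg_atTop hq)
  filter_upwards [ratio_tendsto.eventually_le_const one_pos, eventually_gt_atTop 0]
    with s ratio_le s_pos
  calc s ^ p + 1
      = (s ^ (-(q - p)) + s ^ (-q)) * s ^ q := by
        rw [add_mul, ← Real.rpow_add s_pos, ← Real.rpow_add s_pos, neg_add_cancel,
          Real.rpow_zero, neg_sub, sub_add_cancel]
    _ ≤ s ^ q := mul_le_of_le_one_left (Real.rpow_nonneg s_pos.le q) ratio_le

theorem tightMech_fails_delta3_general {ε : ℝ} (hε : 0 < ε) :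
    ∃ s₀ : ℝ, 1 < s₀ ∧ ∀ s : ℝ, s₀ ≤ s → ∀ α < 1,
      ∀ γc γd st : ℝ,
        γc = (1 - α) / ((s - 1) * (s * (s + 1) - 1)) →
        γd = s * (s + 1) * (1 - α) / (s * (s + 1) - 1) →
        st = s ^ ((2 : ℝ) - ε) →
        (st ^ 2 * (α - 1 + γc + γd) - st * γd - γc =
            (1 - α) * (-(s ^ ((5 : ℝ) - ε)) + s ^ ((5 : ℝ) - 2 * ε)
              + s ^ ((3 : ℝ) - ε) - 1) / (s ^ 3 - 2 * s + 1)) ∧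
        (st ^ 2 * (α - 1 + γc + γd) - st * γd - γc < 0) ∧
        (st ^ 2 * (tightMech s α (Equiv.refl (Fin 4)) 0 - tightMech s α cabd 0)
          + st * (tightMech s α (Equiv.refl (Fin 4)) 1 - tightMech s α cabd 1)
          + (tightMech s α (Equiv.refl (Fin 4)) 2 - tightMech s α cabd 2) < 0) := by
  have dominated : ∀ᶠ s : ℝ in atTop, s ^ (2 - ε) + 1 ≤ s ^ 2 := by
    simpa using eventually_rpow_add_one_le_rpow (sub_lt_self 2 hε) two_pos
  obtain ⟨s₀, large⟩ := eventually_atTop.mp ((eventually_gt_atTop 1).and dominated)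
  refine ⟨s₀, (large s₀ le_rfl).1, ?_⟩
  rintro s hs α hα _ _ _ rfl rfl rfl
  obtain ⟨one_lt, le_sq⟩ := large s hs
  have s_pos : 0 < s := one_pos.trans one_lt
  have neg : tightDelta s α (s ^ (2 - ε)) < 0 :=
    tightDelta_neg one_lt hα (Real.rpow_nonneg s_pos.le _) le_sq
  have closed_form := tightDelta_eq_div (cube_sub_two_mul_add_one_pos one_lt).ne' α (s ^ (2 - ε))
  rw [rpow_two_sub_mul_eq s_pos] at closed_form
  exact ⟨(tightDelta_eq ..).symm.trans closed_form, (tightDelta_eq ..).symm.trans_lt neg, neg⟩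

/-- **Failure of `r^(2-ε)`-partial dominance in the tightness construction.**
For every `ε ∈ (0,2)` and all sufficiently large `s > 1` and `α ∈ [0,1)`, setting
`s̃ = s^(2-ε)`, the third adjusted partial sum satisfies the identity
`s̃²(α-1+γc+γd) - s̃·γd - γc = (1-α)(-s^(5-ε)+s^(5-2ε)+s^(3-ε)-1)/(s³-2s+1)`
and is strictly negative; consequently, the constructed mechanism's third adjusted
partial sum for the truthful report `a≻b≻c≻d` against the non-local misreport
`c≻a≻b≻d` is negative. -/
theorem tightMech_fails_delta3 (ε : ℝ) (hε : ε ∈ Set.Ioo (0 : ℝ) 2) :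
    ∃ s₀ : ℝ, 1 < s₀ ∧ ∀ s : ℝ, s₀ ≤ s → ∀ α ∈ Set.Ico (0 : ℝ) 1,
      ∀ γc γd st : ℝ,
        γc = (1 - α) / ((s - 1) * (s * (s + 1) - 1)) →
        γd = s * (s + 1) * (1 - α) / (s * (s + 1) - 1) →
        st = s ^ ((2 : ℝ) - ε) →
        (st ^ 2 * (α - 1 + γc + γd) - st * γd - γc =
            (1 - α) * (-(s ^ ((5 : ℝ) - ε)) + s ^ ((5 : ℝ) - 2 * ε)
              + s ^ ((3 : ℝ) - ε) - 1) / (s ^ 3 - 2 * s + 1)) ∧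
        (st ^ 2 * (α - 1 + γc + γd) - st * γd - γc < 0) ∧
        (st ^ 2 * (tightMech s α (Equiv.refl (Fin 4)) 0 - tightMech s α cabd 0)
          + st * (tightMech s α (Equiv.refl (Fin 4)) 1 - tightMech s α cabd 1)
          + (tightMech s α (Equiv.refl (Fin 4)) 2 - tightMech s α cabd 2) < 0) := by
  obtain ⟨s₀, one_lt, h⟩ := tightMech_fails_delta3_general hε.1
  exact ⟨s₀, one_lt, fun s hs α hα => h s hs α hα.2⟩
end
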